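/- arXiv:2105.13819 — 12 statements merged into one kernel-verified Lean document; each statement's English description precedes it below -/
import Mathlib

section
/- There is a universal constant C < ∞ with the following property. Let τ⋆ ∈ ℝ, let ρ : (−∞,τ⋆] → [1,∞) be differentiable with −ρ(τ) ≤ ρ′(τ) ≤ 0, let χ : [0,∞) → [0,1] be smooth with χ ≡ 1 on [0,1] and χ ≡ 0 on [2,∞), and let u = u(y,τ) be a C² function defined for τ ≤ τ⋆ and |y| < 3ρ(τ) (y = (y₁,y₂) ∈ ℝ²), with u ≥ −1, satisfying the bubble-sheet graph equation u_τ = 𝓛u − u²/(2√2) − u³/(4 + 2√2·u) − |∇u|²·Δu/(1 + |∇u|²), where ∇ and Δ are taken in the y-variables. Then the truncated function û(y,τ) := u(y,τ)·χ(|y|/ρ(τ)) satisfies ∂_τ û = 𝓛û − û²/(2√2) + E, where the error term E := ∂_τ û − 𝓛û + û²/(2√2) obeys the pointwise bound |E| ≤ C·[ χ·|u|³ + χ·|∇u|²·|∇²u| + |χ′|·ρ⁻¹·(|∇u| + |y|·|u|) + |χ″|·ρ⁻²·|u| + χ(1−χ)·(|u|² + |∇²u|²) ], with χ, χ′, χ″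 evaluated at |y|/ρ(τ). -/
noncomputable section

/-- Partial derivative in the first spatial variable `y₁`. -/
def pd1 (f : ℝ × ℝ × ℝ → ℝ) (p : ℝ × ℝ × ℝ) : ℝ :=
  deriv (fun s => f (s, p.2.1, p.2.2)) p.1

/-- Partial derivative in the second spatial variable `y₂`. -/
def pd2 (f : ℝ × ℝ × ℝ → ℝ) (p : ℝ × ℝ × ℝ) : ℝ :=
  deriv (fun s => f (p.1, s, p.2.2)) p.2.1

/-- Partial derivative in the time variable `τ`. -/
def pdt (f : ℝ × ℝ × ℝ → ℝ) (p : ℝ × ℝ × ℝ) : ℝ :=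
  deriv (fun s => f (p.1, p.2.1, s)) p.2.2

/-- Squared norm `|∇f|²` of the spatial gradient. -/
def gradSq (f : ℝ × ℝ × ℝ → ℝ) (p : ℝ × ℝ × ℝ) : ℝ :=
  (pd1 f p) ^ 2 + (pd2 f p) ^ 2

/-- Spatial Laplacian `Δf`. -/
def lap (f : ℝ × ℝ × ℝ → ℝ) (p : ℝ × ℝ × ℝ) : ℝ :=
  pd1 (pd1 f) p + pd2 (pd2 f) p

/-- Norm `|∇²f|` of the spatial Hessian. -/
def hessNorm (f : ℝ × ℝ × ℝ → ℝ) (p : ℝ × ℝ × ℝ) : ℝ :=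
  Real.sqrt ((pd1 (pd1 f) p) ^ 2 + (pd1 (pd2 f) p) ^ 2 + (pd2 (pd1 f) p) ^ 2
    + (pd2 (pd2 f) p) ^ 2)

/-- The two-dimensional Ornstein–Uhlenbeck operator
`𝓛f = Δf − (y₁/2)f_{y₁} − (y₂/2)f_{y₂} + f`. -/
def OU (f : ℝ × ℝ × ℝ → ℝ) (p : ℝ × ℝ × ℝ) : ℝ :=
  lap f p - p.1 / 2 * pd1 f p - p.2.1 / 2 * pd2 f p + f p

/-- The spatial radius `|y|`. -/
def rad (p : ℝ × ℝ × ℝ) : ℝ := Real.sqrt (p.1 ^ 2 + p.2.1 ^ 2)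

/-- The truncated function `û(y,τ) = u(y,τ)·χ(|y|/ρ(τ))`. -/
def hatu (ρ χ : ℝ → ℝ) (u : ℝ × ℝ × ℝ → ℝ) (p : ℝ × ℝ × ℝ) : ℝ :=
  u p * χ (rad p / ρ p.2.2)

/-- The error term `E = ∂_τ û − 𝓛û + û²/(2√2)`. -/
def Eerr (ρ χ : ℝ → ℝ) (u : ℝ × ℝ × ℝ → ℝ) (p : ℝ × ℝ × ℝ) : ℝ :=
  pdt (hatu ρ χ u) p - OU (hatu ρ χ u) p + (hatu ρ χ u p) ^ 2 / (2 * Real.sqrt 2)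

/-- One-dimensional slice of the cutoff radius. -/
theorem aux_rad (a c x : ℝ) (h : 0 < x ^ 2 + a ^ 2) :
    HasDerivAt (fun s => Real.sqrt (s ^ 2 + a ^ 2) / c) (x / Real.sqrt (x ^ 2 + a ^ 2) / c) x := by
  have h1 : HasDerivAt (fun s : ℝ => s ^ 2 + a ^ 2) (2 * x) x := by
    simpa using (hasDerivAt_pow 2 x).add_const (a ^ 2)
  have h2 := (h1.sqrt h.ne').div_const c
  refine h2.congr_deriv ?_
  have : Real.sqrt (x ^ 2 + a ^ 2) ≠ 0 := (Real.sqrt_pos.2 h).ne'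
  field_simp

theorem aux_first (χ f : ℝ → ℝ) (a c x : ℝ) (hχ : Differentiable ℝ χ) (h : 0 < x ^ 2 + a ^ 2)
    (hf : DifferentiableAt ℝ f x) :
    HasDerivAt (fun s => f s * χ (Real.sqrt (s ^ 2 + a ^ 2) / c))
      (deriv f x * χ (Real.sqrt (x ^ 2 + a ^ 2) / c) + f x *
        (deriv χ (Real.sqrt (x ^ 2 + a ^ 2) / c) * (x / Real.sqrt (x ^ 2 + a ^ 2) / c))) x := by
  have h1 := aux_rad a c x h
  have h2 := (hχ (Real.sqrt (x ^ 2 + a ^ 2) / c)).hasDerivAt.comp x h1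
  exact hf.hasDerivAt.mul h2

theorem aux_second (χ f : ℝ → ℝ) (a c x : ℝ) (hχ : Differentiable ℝ χ)
    (hχ' : Differentiable ℝ (deriv χ)) (h : 0 < x ^ 2 + a ^ 2)
    (hf : ContDiffAt ℝ 2 f x) (r : ℝ) (hr : r = Real.sqrt (x ^ 2 + a ^ 2)) :
    deriv (deriv (fun s => f s * χ (Real.sqrt (s ^ 2 + a ^ 2) / c))) x =
      deriv (deriv f) x * χ (r / c) + 2 * deriv f x * (deriv χ (r / c) * (x / r / c))
      + f x * (deriv (deriv χ) (r / c) * (x / r / c) ^ 2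
        + deriv χ (r / c) * ((1 / r - x ^ 2 / r ^ 3) / c)) := by
  have hf1 : ∀ᶠ s in nhds x, DifferentiableAt ℝ f s := by
    filter_upwards [hf.eventually (by simp)] with s hs
    exact hs.differentiableAt (by norm_num)
  have hpos : ∀ᶠ s in nhds x, 0 < s ^ 2 + a ^ 2 := by
    have : Continuous (fun s : ℝ => s ^ 2 + a ^ 2) := by fun_prop
    exact this.continuousAt.eventually (lt_mem_nhds h)
  have hev : deriv (fun s => f s * χ (Real.sqrt (s ^ 2 + a ^ 2) / c)) =ᶠ[nhds x]
      fun s => deriv f s * χ (Real.sqrt (s ^ 2 + a ^ 2) / c) + f s *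
        (deriv χ (Real.sqrt (s ^ 2 + a ^ 2) / c) * (s / Real.sqrt (s ^ 2 + a ^ 2) / c)) := by
    filter_upwards [hf1, hpos] with s h1 h2
    exact (aux_first χ f a c s hχ h2 h1).deriv
  rw [hev.deriv_eq]
  have hd : DifferentiableAt ℝ (deriv f) x := by
    have h1 : ContDiffAt ℝ 1 (fderiv ℝ f) x := hf.fderiv_right (by norm_num)
    have h2 := h1.differentiableAt (by norm_num)
    have h3 : deriv f = fun s => fderiv ℝ f s 1 := by
      funext s
      exact (fderiv_apply_one_eq_deriv (f := f) (x := s)).symm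
    rw [h3]
    exact h2.clm_apply (differentiableAt_const _)
  have hrpos : 0 < r := hr ▸ Real.sqrt_pos.2 h
  have e1 := aux_first χ (deriv f) a c x hχ h hd
  have e2 := (hχ' (Real.sqrt (x ^ 2 + a ^ 2) / c)).hasDerivAt.comp x (aux_rad a c x h)
  have e3 : HasDerivAt (fun s => s / Real.sqrt (s ^ 2 + a ^ 2) / c)
      ((1 / r - x ^ 2 / r ^ 3) / c) x := by
    have h1 := aux_rad a 1 x h
    simp only [div_one] at h1
    have h2 := ((hasDerivAt_id x).div h1 (by rw [← hr]; exact hrpos.ne')).div_const c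
    refine h2.congr_deriv ?_
    rw [← hr]
    simp only [id]
    field_simp
  have e4 := e1.add ((hf.differentiableAt (by norm_num)).hasDerivAt.mul (e2.mul e3))
  refine e4.deriv.trans ?_
  simp only [Function.comp, ← hr, Pi.mul_apply]
  ring

/-- The final pointwise estimate, in terms of real numbers only. -/
theorem aux_bound (P D D2 U r c c' y1 y2 a b H1 H2 h12 h21 G H : ℝ)
    (hP0 : 0 ≤ P) (hP1 : P ≤ 1) (hU : -1 ≤ U) (hc : 1 ≤ c) (hrc : c ≤ r ∨ (D = 0 ∧ D2 = 0))
    (hr0 : 0 ≤ r)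
    (hr : r ^ 2 = y1 ^ 2 + y2 ^ 2) (hc1 : -c ≤ c') (hc2 : c' ≤ 0)
    (hG : G = a ^ 2 + b ^ 2) (hH : H = Real.sqrt (H1 ^ 2 + h12 ^ 2 + h21 ^ 2 + H2 ^ 2)) :
    |-(P * (1 - P) * U ^ 2 / (2 * Real.sqrt 2)) - P * (U ^ 3 / (4 + 2 * Real.sqrt 2 * U))
      - P * (G * (H1 + H2) / (1 + G)) + U * D * (r * (-c') / c ^ 2)
      - 2 * D * (y1 * a + y2 * b) / r / c - U * D2 / c ^ 2 - U * D / (r * c)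
      + U * D * r / (2 * c)| ≤ 10 * (P * |U| ^ 3 + P * G * H
        + |D| * c⁻¹ * (Real.sqrt G + r * |U|) + |D2| * (c ^ 2)⁻¹ * |U|
        + P * (1 - P) * (|U| ^ 2 + H ^ 2)) := by
  have hc0 : 0 < c := by linarith
  have hG0 : 0 ≤ G := by rw [hG]; positivity
  have hH0 : 0 ≤ H := by rw [hH]; positivity
  have hHsq : H ^ 2 = H1 ^ 2 + h12 ^ 2 + h21 ^ 2 + H2 ^ 2 := by
    rw [hH]; exact Real.sq_sqrt (by positivity)
  have s1 : 1 ≤ Real.sqrt 2 := by rw [Real.le_sqrt] <;> norm_num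
  have s2 : Real.sqrt 2 ≤ 3 / 2 := by rw [Real.sqrt_le_left] <;> norm_num
  have hPP : 0 ≤ P * (1 - P) := mul_nonneg hP0 (by linarith)
  have t1 : |P * (1 - P) * U ^ 2 / (2 * Real.sqrt 2)| ≤ P * (1 - P) * (|U| ^ 2 + H ^ 2) := by
    rw [abs_of_nonneg (by positivity), sq_abs]
    have : P * (1 - P) * U ^ 2 / (2 * Real.sqrt 2) ≤ P * (1 - P) * U ^ 2 :=
      div_le_self (by positivity) (by linarith)
    nlinarith [mul_nonneg hPP (sq_nonneg H)]
  have t2 : |P * (U ^ 3 / (4 + 2 * Real.sqrt 2 * U))| ≤ P * |U| ^ 3 := by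
    have hd : 1 ≤ 4 + 2 * Real.sqrt 2 * U := by nlinarith
    rw [abs_mul, abs_of_nonneg hP0, abs_div, abs_pow, abs_of_pos (by linarith : 0 < 4 + 2 * Real.sqrt 2 * U)]
    exact mul_le_mul_of_nonneg_left (div_le_self (by positivity) hd) hP0
  have t3 : |P * (G * (H1 + H2) / (1 + G))| ≤ 2 * (P * G * H) := by
    have hL : |H1 + H2| ≤ 2 * H := by
      apply abs_le_of_sq_le_sq _ (by positivity)
      nlinarith [sq_nonneg (H1 - H2), sq_nonneg h12, sq_nonneg h21, sq_nonneg H1, sq_nonneg H2]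
    rw [abs_mul, abs_of_nonneg hP0, abs_div, abs_mul, abs_of_nonneg hG0,
      abs_of_pos (by linarith : 0 < 1 + G)]
    have : G * |H1 + H2| / (1 + G) ≤ G * |H1 + H2| := div_le_self (by positivity) (by linarith)
    have h3 : G * |H1 + H2| ≤ G * (2 * H) := mul_le_mul_of_nonneg_left hL hG0
    nlinarith [mul_le_mul_of_nonneg_left (this.trans h3) hP0]
  have t6 : |U * D2 / c ^ 2| = |D2| * (c ^ 2)⁻¹ * |U| := by
    rw [abs_div, abs_mul, abs_of_pos (by positivity : 0 < c ^ 2)]; ring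
  have t4 : |U * D * (r * (-c') / c ^ 2)| ≤ |D| * c⁻¹ * (r * |U|) := by
    have : r * (-c') / c ^ 2 ≤ r * c⁻¹ := by
      rw [div_le_iff₀ (by positivity)]
      have : r * c⁻¹ * c ^ 2 = r * c := by field_simp
      rw [this]; exact mul_le_mul_of_nonneg_left (by linarith) hr0
    have h0 : 0 ≤ r * (-c') / c ^ 2 := div_nonneg (mul_nonneg hr0 (by linarith)) (by positivity)
    rw [abs_mul, abs_mul, abs_of_nonneg h0]
    calc |U| * |D| * (r * (-c') / c ^ 2) ≤ |U| * |D| * (r * c⁻¹) := by gcongr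
      _ = _ := by ring
  have t8 : |U * D * r / (2 * c)| ≤ |D| * c⁻¹ * (r * |U|) := by
    rw [abs_div, abs_mul, abs_mul, abs_of_nonneg hr0, abs_of_pos (by positivity : 0 < 2 * c)]
    have : |U| * |D| * r / (2 * c) = (|D| * c⁻¹ * (r * |U|)) / 2 := by field_simp
    rw [this]; exact half_le_self (by positivity)
  have t7 : |U * D / (r * c)| ≤ |D| * c⁻¹ * (r * |U|) := by
    rcases hrc with h | ⟨h, -⟩
    · have hr1 : 1 ≤ r := hc.trans h
      rw [abs_div, abs_mul, abs_mul, abs_of_nonneg hr0, abs_of_pos hc0]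
      have : |U| * |D| / (r * c) = |D| * c⁻¹ * (r⁻¹ * |U|) := by field_simp
      rw [this]
      have : r⁻¹ ≤ r := (inv_le_one_of_one_le₀ hr1).trans hr1
      gcongr
    · simp [h]
  have t5 : |2 * D * (y1 * a + y2 * b) / r / c| ≤ 2 * (|D| * c⁻¹ * Real.sqrt G) := by
    rcases hrc with h | ⟨h, -⟩
    · have hr1 : 0 < r := by linarith
      have hin : |y1 * a + y2 * b| ≤ r * Real.sqrt G := by
        apply abs_le_of_sq_le_sq _ (by positivity)
        rw [mul_pow, Real.sq_sqrt hG0, hr, hG]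
        nlinarith [sq_nonneg (y1 * b - y2 * a)]
      rw [abs_div, abs_div, abs_mul, abs_mul, abs_of_pos hr1, abs_of_pos hc0, abs_two]
      calc 2 * |D| * |y1 * a + y2 * b| / r / c ≤ 2 * |D| * (r * Real.sqrt G) / r / c := by gcongr
        _ = _ := by field_simp
    · simp [h]
  have n1 : 0 ≤ P * |U| ^ 3 := by positivity
  have n2 : 0 ≤ P * G * H := by positivity
  have n3 : 0 ≤ |D| * c⁻¹ * Real.sqrt G := by positivity
  have n4 : 0 ≤ |D| * c⁻¹ * (r * |U|) := by positivity
  have n5 : 0 ≤ |D2| * (c ^ 2)⁻¹ * |U| := by positivity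
  have n6 : 0 ≤ P * (1 - P) * (|U| ^ 2 + H ^ 2) := by positivity
  have t6' := t6.le
  rw [mul_add (|D| * c⁻¹)]
  rw [abs_le] at *
  constructor <;> linarith [t1.1, t1.2, t2.1, t2.2, t3.1, t3.2, t4.1, t4.2, t5.1, t5.2, t6'.1, t6'.2,
    t7.1, t7.2, t8.1, t8.2]

/-- Evolution equation with error estimate for the truncated bubble-sheet graph function. -/
theorem stmt_1 :
    ∃ C : ℝ, 0 < C ∧
      ∀ (τs : ℝ) (ρ χ : ℝ → ℝ) (u : ℝ × ℝ × ℝ → ℝ),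
        (∀ τ ≤ τs, 1 ≤ ρ τ) →
        (∀ τ ≤ τs, DifferentiableAt ℝ ρ τ) →
        (∀ τ ≤ τs, -ρ τ ≤ deriv ρ τ ∧ deriv ρ τ ≤ 0) →
        ContDiff ℝ (⊤ : ℕ∞) χ →
        (∀ s : ℝ, 0 ≤ s → 0 ≤ χ s ∧ χ s ≤ 1) →
        (∀ s : ℝ, 0 ≤ s → s ≤ 1 → χ s = 1) →
        (∀ s : ℝ, 2 ≤ s → χ s = 0) →
        (∀ p : ℝ × ℝ × ℝ, p.2.2 ≤ τs → rad p < 3 * ρ p.2.2 → ContDiffAt ℝ 2 u p) →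
        (∀ p : ℝ × ℝ × ℝ, p.2.2 ≤ τs → rad p < 3 * ρ p.2.2 → -1 ≤ u p) →
        (∀ p : ℝ × ℝ × ℝ, p.2.2 ≤ τs → rad p < 3 * ρ p.2.2 →
          pdt u p = OU u p - (u p) ^ 2 / (2 * Real.sqrt 2)
            - (u p) ^ 3 / (4 + 2 * Real.sqrt 2 * u p)
            - gradSq u p * lap u p / (1 + gradSq u p)) →
        ∀ p : ℝ × ℝ × ℝ, p.2.2 ≤ τs → rad p < 3 * ρ p.2.2 →
          pdt (hatu ρ χ u) p
              = OU (hatu ρ χ u) p - (hatu ρ χ u p) ^ 2 / (2 * Real.sqrt 2) + Eerr ρ χ u p ∧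
          |Eerr ρ χ u p| ≤ C *
            (χ (rad p / ρ p.2.2) * |u p| ^ 3
              + χ (rad p / ρ p.2.2) * gradSq u p * hessNorm u p
              + |deriv χ (rad p / ρ p.2.2)| * (ρ p.2.2)⁻¹
                  * (Real.sqrt (gradSq u p) + rad p * |u p|)
              + |deriv (deriv χ) (rad p / ρ p.2.2)| * ((ρ p.2.2) ^ 2)⁻¹ * |u p|
              + χ (rad p / ρ p.2.2) * (1 - χ (rad p / ρ p.2.2))
                  * (|u p| ^ 2 + (hessNorm u p) ^ 2)) := by
  refine ⟨10, by norm_num, ?_⟩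
  intro τs ρ χ u hρ1 hρd hρ' hχ hχ01 hχ1 hχ2 hu hum hpde p hpt hpr
  refine ⟨by unfold Eerr; ring, ?_⟩
  obtain ⟨y1, y2, τ⟩ := p
  have hup := hu _ hpt hpr
  have hPDE := hpde _ hpt hpr
  have hU := hum _ hpt hpr
  simp only at hpt hpr
  have hc := hρ1 τ hpt
  have hc0 : 0 < ρ τ := by linarith
  have hr0 : 0 ≤ rad (y1, y2, τ) := Real.sqrt_nonneg _
  have hrsq : rad (y1, y2, τ) ^ 2 = y1 ^ 2 + y2 ^ 2 := Real.sq_sqrt (by positivity)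
  have hs0 : 0 ≤ rad (y1, y2, τ) / ρ τ := by positivity
  obtain ⟨hP0, hP1⟩ := hχ01 _ hs0
  obtain ⟨hc1, hc2⟩ := hρ' τ hpt
  have hf1 : ContDiffAt ℝ 2 (fun s => u (s, y2, τ)) y1 :=
    ContDiffAt.comp (g := u) (f := fun s : ℝ => (s, y2, τ)) y1 hup (by fun_prop)
  have hf2 : ContDiffAt ℝ 2 (fun s => u (y1, s, τ)) y2 :=
    ContDiffAt.comp (g := u) (f := fun s : ℝ => (y1, s, τ)) y2 hup (by fun_prop)
  have hf3 : ContDiffAt ℝ 2 (fun s => u (y1, y2, s)) τ :=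
    ContDiffAt.comp (g := u) (f := fun s : ℝ => (y1, y2, s)) τ hup (by fun_prop)
  have hd1 := hf1.differentiableAt (by norm_num)
  have hd2 := hf2.differentiableAt (by norm_num)
  have hd3 := hf3.differentiableAt (by norm_num)
  have hρτ := hρd τ hpt
  have key := fun D D2 h => aux_bound (χ (rad (y1, y2, τ) / ρ τ)) D D2 (u (y1, y2, τ))
    (rad (y1, y2, τ)) (ρ τ) (deriv ρ τ) y1 y2 (pd1 u (y1, y2, τ)) (pd2 u (y1, y2, τ))
    (pd1 (pd1 u) (y1, y2, τ)) (pd2 (pd2 u) (y1, y2, τ)) (pd1 (pd2 u) (y1, y2, τ))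
    (pd2 (pd1 u) (y1, y2, τ)) (gradSq u (y1, y2, τ)) (hessNorm u (y1, y2, τ))
    hP0 hP1 hU hc h hr0 hrsq hc1 hc2 rfl rfl
  have hG0 : 0 ≤ gradSq u (y1, y2, τ) := by unfold gradSq; positivity
  rcases lt_or_ge (rad (y1, y2, τ)) (ρ τ) with hlt | hge
  · -- near the origin the truncation is trivial
    have hP : χ (rad (y1, y2, τ) / ρ τ) = 1 :=
      hχ1 _ hs0 (by rw [div_le_one hc0]; exact hlt.le)
    have hcrad : Continuous rad := by unfold rad; fun_prop
    have one : ∀ q : ℝ × ℝ × ℝ, rad q < ρ q.2.2 → hatu ρ χ u q = u q := by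
      intro q hq
      have h0 : 0 ≤ rad q := Real.sqrt_nonneg _
      have h1 : 0 < ρ q.2.2 := lt_of_le_of_lt h0 hq
      unfold hatu
      rw [hχ1 _ (by positivity) (by rw [div_le_one h1]; exact hq.le), mul_one]
    have ev1 : (fun s => hatu ρ χ u (s, y2, τ)) =ᶠ[nhds y1] fun s => u (s, y2, τ) := by
      have hcc : Continuous (fun s : ℝ => rad (s, y2, τ)) := hcrad.comp (by fun_prop)
      filter_upwards [hcc.continuousAt.eventually (gt_mem_nhds hlt)] with s hs
      exact one _ hs
    have ev2 : (fun s => hatu ρ χ u (y1, s, τ)) =ᶠ[nhds y2] fun s => u (y1, s, τ) := by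
      have hcc : Continuous (fun s : ℝ => rad (y1, s, τ)) := hcrad.comp (by fun_prop)
      filter_upwards [hcc.continuousAt.eventually (gt_mem_nhds hlt)] with s hs
      exact one _ hs
    have ev3 : (fun s => hatu ρ χ u (y1, y2, s)) =ᶠ[nhds τ] fun s => u (y1, y2, s) := by
      filter_upwards [hρτ.continuousAt.eventually (lt_mem_nhds hlt)] with s hs
      exact one _ hs
    have a1 : pd1 (hatu ρ χ u) (y1, y2, τ) = pd1 u (y1, y2, τ) := ev1.deriv_eq
    have a2 : pd2 (hatu ρ χ u) (y1, y2, τ) = pd2 u (y1, y2, τ) := ev2.deriv_eq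
    have a3 : pdt (hatu ρ χ u) (y1, y2, τ) = pdt u (y1, y2, τ) := ev3.deriv_eq
    have a11 : pd1 (pd1 (hatu ρ χ u)) (y1, y2, τ) = pd1 (pd1 u) (y1, y2, τ) :=
      ev1.deriv.deriv_eq
    have a22 : pd2 (pd2 (hatu ρ χ u)) (y1, y2, τ) = pd2 (pd2 u) (y1, y2, τ) :=
      ev2.deriv.deriv_eq
    have a0 := one (y1, y2, τ) hlt
    have k := key 0 0 (Or.inr ⟨rfl, rfl⟩)
    have hE : Eerr ρ χ u (y1, y2, τ) = pdt u (y1, y2, τ) - OU u (y1, y2, τ)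
        + (u (y1, y2, τ)) ^ 2 / (2 * Real.sqrt 2) := by
      unfold Eerr OU lap
      rw [a1, a2, a3, a11, a22, a0]
    rw [hE, hPDE]
    simp only [hP] at k ⊢
    have n1 : 0 ≤ |deriv χ (rad (y1, y2, τ) / ρ τ)| * (ρ τ)⁻¹
      * (Real.sqrt (gradSq u (y1, y2, τ)) + rad (y1, y2, τ) * |u (y1, y2, τ)|) := by positivity
    have n2 : 0 ≤ |deriv (deriv χ) (rad (y1, y2, τ) / ρ τ)| * ((ρ τ) ^ 2)⁻¹
      * |u (y1, y2, τ)| := by positivity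
    refine le_trans (le_of_eq ?_) (k.trans ?_)
    · congr 1
      unfold lap
      ring
    · simp only [abs_zero, zero_mul]
      linarith
  · have hrpos : 0 < rad (y1, y2, τ) := lt_of_lt_of_le hc0 hge
    have hpos : 0 < y1 ^ 2 + y2 ^ 2 := by rw [← hrsq]; positivity
    have hpos' : 0 < y2 ^ 2 + y1 ^ 2 := by linarith
    have hχd : Differentiable ℝ χ := hχ.differentiable (by simp)
    have hχ2' : ContDiff ℝ 2 χ := contDiff_infty.1 hχ 2
    have hχdd : Differentiable ℝ (deriv χ) := by
      have h1 : ContDiff ℝ 1 (deriv χ) := by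
        have : ContDiff ℝ (1 + 1) χ := by simpa [one_add_one_eq_two] using hχ2'
        exact (contDiff_succ_iff_deriv.1 this).2.2
      exact h1.differentiable (by norm_num)
    have hr' : rad (y1, y2, τ) = Real.sqrt (y2 ^ 2 + y1 ^ 2) := by
      unfold rad; rw [add_comm]
    have g2 : (fun s => hatu ρ χ u (y1, s, τ))
        = fun s => u (y1, s, τ) * χ (Real.sqrt (s ^ 2 + y1 ^ 2) / ρ τ) := by
      funext s
      simp only [hatu, rad]
      rw [add_comm]
    have a1 : pd1 (hatu ρ χ u) (y1, y2, τ) = pd1 u (y1, y2, τ) * χ (rad (y1, y2, τ) / ρ τ)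
        + u (y1, y2, τ) * (deriv χ (rad (y1, y2, τ) / ρ τ) * (y1 / rad (y1, y2, τ) / ρ τ)) :=
      (aux_first χ (fun s => u (s, y2, τ)) y2 (ρ τ) y1 hχd hpos hd1).deriv
    have a2 : pd2 (hatu ρ χ u) (y1, y2, τ) = pd2 u (y1, y2, τ) * χ (rad (y1, y2, τ) / ρ τ)
        + u (y1, y2, τ) * (deriv χ (rad (y1, y2, τ) / ρ τ) * (y2 / rad (y1, y2, τ) / ρ τ)) := by
      have h := (aux_first χ (fun s => u (y1, s, τ)) y1 (ρ τ) y2 hχd hpos' hd2).deriv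
      rw [← g2, ← hr'] at h
      exact h
    have a11 := aux_second χ (fun s => u (s, y2, τ)) y2 (ρ τ) y1 hχd hχdd hpos hf1
      (rad (y1, y2, τ)) rfl
    have a22 := aux_second χ (fun s => u (y1, s, τ)) y1 (ρ τ) y2 hχd hχdd hpos' hf2
      (rad (y1, y2, τ)) hr'
    rw [← g2] at a22
    change pd1 (pd1 (hatu ρ χ u)) (y1, y2, τ) = pd1 (pd1 u) (y1, y2, τ) * _
      + 2 * pd1 u (y1, y2, τ) * _ + _ at a11
    change pd2 (pd2 (hatu ρ χ u)) (y1, y2, τ) = pd2 (pd2 u) (y1, y2, τ) * _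
      + 2 * pd2 u (y1, y2, τ) * _ + _ at a22
    have a3 : pdt (hatu ρ χ u) (y1, y2, τ) = pdt u (y1, y2, τ) * χ (rad (y1, y2, τ) / ρ τ)
        + u (y1, y2, τ) * (deriv χ (rad (y1, y2, τ) / ρ τ)
          * (rad (y1, y2, τ) * (-deriv ρ τ) / ρ τ ^ 2)) := by
      have h1 : HasDerivAt (fun s => rad (y1, y2, τ) / ρ s)
          (rad (y1, y2, τ) * (-deriv ρ τ) / ρ τ ^ 2) τ := by
        refine ((hasDerivAt_const τ (rad (y1, y2, τ))).div hρτ.hasDerivAt hc0.ne').congr_deriv ?_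
        ring
      have h2 := (hχd (rad (y1, y2, τ) / ρ τ)).hasDerivAt.comp τ h1
      exact (hd3.hasDerivAt.mul h2).deriv
    have k := key (deriv χ (rad (y1, y2, τ) / ρ τ)) (deriv (deriv χ) (rad (y1, y2, τ) / ρ τ))
      (Or.inl hge)
    refine le_trans (le_of_eq ?_) k
    congr 1
    unfold Eerr
    rw [a3, hPDE]
    unfold OU lap
    rw [a1, a2, a11, a22]
    simp only [hatu]
    generalize hess : gradSq u (y1, y2, τ) = G at *
    generalize χ (rad (y1, y2, τ) / ρ τ) = P
    generalize deriv χ (rad (y1, y2, τ) / ρ τ) = D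
    generalize deriv (deriv χ) (rad (y1, y2, τ) / ρ τ) = D2
    generalize rad (y1, y2, τ) = r at *
    generalize deriv ρ τ = c'
    generalize ρ τ = c at *
    have i1 : 1 / r - y1 ^ 2 / r ^ 3 + (1 / r - y2 ^ 2 / r ^ 3) = 1 / r := by
      have : 1 / r - y1 ^ 2 / r ^ 3 + (1 / r - y2 ^ 2 / r ^ 3) = 2 / r - (y1 ^ 2 + y2 ^ 2) / r ^ 3 := by
        ring
      rw [this, ← hrsq]
      field_simp
      norm_num
    have i2 : (y1 / r / c) ^ 2 + (y2 / r / c) ^ 2 = 1 / c ^ 2 := by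
      have : (y1 / r / c) ^ 2 + (y2 / r / c) ^ 2 = (y1 ^ 2 + y2 ^ 2) / r ^ 2 / c ^ 2 := by ring
      rw [this, ← hrsq]
      field_simp
    have i3 : y1 * (y1 / r / c) + y2 * (y2 / r / c) = r / c := by
      have : y1 * (y1 / r / c) + y2 * (y2 / r / c) = (y1 ^ 2 + y2 ^ 2) / r / c := by ring
      rw [this, ← hrsq]
      field_simp
    linear_combination (-u (y1, y2, τ) * D / c) * i1 + (-u (y1, y2, τ) * D2) * i2
      + (u (y1, y2, τ) * D / 2) * i3

end
end

section
/- Suppose U₊, U₀, U₋ : (−∞,τ₀] → ℝ are nonnegative differentiable functions satisfying the Merle–Zaag differential inequalities with parameter ε ∈ (0, 1/100]. If 2ε·(U₊(τ₁) + U₀(τ₁)) ≤ U₋(τ₁) for some τ₁ ≤ τ₀, then 2ε·(U₊(τ) + U₀(τ)) ≤ U₋(τ) for all τ ≤ τ₁. -/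
/-- Backward invariance for the Merle–Zaag differential inequalities: if the negative mode
dominates at some time `τ₁`, it dominates at all earlier times. -/
theorem stmt_2 (τ₀ ε : ℝ) (hε : 0 < ε) (hε' : ε ≤ 1 / 100)
    (Up U0 Um : ℝ → ℝ)
    (hUpdiff : ∀ τ ≤ τ₀, DifferentiableAt ℝ Up τ)
    (hU0diff : ∀ τ ≤ τ₀, DifferentiableAt ℝ U0 τ)
    (hUmdiff : ∀ τ ≤ τ₀, DifferentiableAt ℝ Um τ)
    (hUp0 : ∀ τ ≤ τ₀, 0 ≤ Up τ) (hU00 : ∀ τ ≤ τ₀, 0 ≤ U0 τ) (hUm0 : ∀ τ ≤ τ₀, 0 ≤ Um τ)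
    (hMZp : ∀ τ ≤ τ₀, Up τ - ε * (Up τ + U0 τ + Um τ) ≤ deriv Up τ)
    (hMZ0 : ∀ τ ≤ τ₀, |deriv U0 τ| ≤ ε * (Up τ + U0 τ + Um τ))
    (hMZm : ∀ τ ≤ τ₀, deriv Um τ ≤ -Um τ + ε * (Up τ + U0 τ + Um τ))
    (τ₁ : ℝ) (hτ₁ : τ₁ ≤ τ₀)
    (hstart : 2 * ε * (Up τ₁ + U0 τ₁) ≤ Um τ₁) :
    ∀ τ ≤ τ₁, 2 * ε * (Up τ + U0 τ) ≤ Um τ := by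
  intro τ hτ
  set c : ℝ := 1 - ε - 4 * ε ^ 2 with hc
  have hd : ∀ x ≤ τ₀, HasDerivAt (fun t => Real.exp (c * t) * (Um t - 2 * ε * (Up t + U0 t)))
      (Real.exp (c * x) * (c * 1) * (Um x - 2 * ε * (Up x + U0 x)) +
        Real.exp (c * x) * (deriv Um x - 2 * ε * (deriv Up x + deriv U0 x))) x := by
    intro x hx
    exact (((hasDerivAt_id x).const_mul c).exp).mul
      ((hUmdiff x hx).hasDerivAt.sub
        (((hUpdiff x hx).hasDerivAt.add (hU0diff x hx).hasDerivAt).const_mul (2 * ε)))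
  have hanti : AntitoneOn (fun t => Real.exp (c * t) * (Um t - 2 * ε * (Up t + U0 t)))
      (Set.Iic τ₁) := by
    apply antitoneOn_of_deriv_nonpos (convex_Iic τ₁)
    · intro x hx
      exact (hd x (le_trans hx hτ₁)).continuousAt.continuousWithinAt
    · intro x hx
      exact (hd x (le_trans (Set.mem_Iic.1 (interior_subset hx)) hτ₁)).differentiableAt.differentiableWithinAt
    · intro x hx
      have hx0 : x ≤ τ₀ := le_trans (Set.mem_Iic.1 (interior_subset hx)) hτ₁
      rw [(hd x hx0).deriv]
      have h1 := mul_le_mul_of_nonneg_left (hMZp x hx0) (by positivity : 0 ≤ 2 * ε)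
      have h2 := mul_le_mul_of_nonneg_left (abs_le.1 (hMZ0 x hx0)).1 (by positivity : 0 ≤ 2 * ε)
      have h3 := hMZm x hx0
      have hp := hUp0 x hx0
      have h0 := hU00 x hx0
      have hk : 0 ≤ ε * (2 - (1 + 4 * ε) * (1 + 2 * ε)) :=
        mul_nonneg hε.le (by nlinarith)
      have h4 := mul_nonneg hk (add_nonneg hp h0)
      have h5 := mul_nonneg hε.le hp
      have key : c * (Um x - 2 * ε * (Up x + U0 x)) +
          (deriv Um x - 2 * ε * (deriv Up x + deriv U0 x)) ≤ 0 := by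
        rw [hc]
        linarith
      have h6 := mul_nonpos_of_nonneg_of_nonpos (Real.exp_pos (c * x)).le key
      linarith
  have h := hanti (Set.mem_Iic.2 hτ) (Set.mem_Iic.2 le_rfl) hτ
  have h1 : 0 ≤ Real.exp (c * τ₁) * (Um τ₁ - 2 * ε * (Up τ₁ + U0 τ₁)) :=
    mul_nonneg (Real.exp_pos _).le (sub_nonneg.2 hstart)
  exact sub_nonneg.1 (nonneg_of_mul_nonneg_right (h1.trans h) (Real.exp_pos _))
end

section
/- Suppose U₊, U₀, U₋ : (−∞,τ₀] → ℝ are nonnegative differentiable functions satisfying the Merle–Zaag differential inequalities with parameter ε ∈ (0, 1/100]. If U₋(τ) < 2ε·(U₀(τ) + U₊(τ)) for every τ ≤ τ₀, and U₊(τ₀) < 8ε·U₀(τ₀), then U₊(τ) < 8ε·U₀(τ) for all τ ≤ τ₀. -/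
/-- Dominance propagation for the Merle–Zaag differential inequalities: if the negative mode is
always dominated and the unstable mode is dominated by the neutral mode at time `τ₀`, then the
unstable mode is dominated by the neutral mode at all earlier times. -/
theorem stmt_3 (τ₀ ε : ℝ) (hε : 0 < ε) (hε' : ε ≤ 1 / 100)
    (Up U0 Um : ℝ → ℝ)
    (hUpdiff : ∀ τ ≤ τ₀, DifferentiableAt ℝ Up τ)
    (hU0diff : ∀ τ ≤ τ₀, DifferentiableAt ℝ U0 τ)
    (hUmdiff : ∀ τ ≤ τ₀, DifferentiableAt ℝ Um τ)
    (hUp0 : ∀ τ ≤ τ₀, 0 ≤ Up τ) (hU00 : ∀ τ ≤ τ₀, 0 ≤ U0 τ) (hUm0 : ∀ τ ≤ τ₀, 0 ≤ Um τ)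
    (hMZp : ∀ τ ≤ τ₀, Up τ - ε * (Up τ + U0 τ + Um τ) ≤ deriv Up τ)
    (hMZ0 : ∀ τ ≤ τ₀, |deriv U0 τ| ≤ ε * (Up τ + U0 τ + Um τ))
    (hMZm : ∀ τ ≤ τ₀, deriv Um τ ≤ -Um τ + ε * (Up τ + U0 τ + Um τ))
    (hdom : ∀ τ ≤ τ₀, Um τ < 2 * ε * (U0 τ + Up τ))
    (hstart : Up τ₀ < 8 * ε * U0 τ₀) :
    ∀ τ ≤ τ₀, Up τ < 8 * ε * U0 τ := by
  have key : ∀ s ≤ τ₀, 8 * ε * U0 s ≤ Up s → 0 < deriv Up s - 8 * ε * deriv U0 s := by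
    intro s hs h
    have h1 := hMZp s hs
    have h2 := (abs_le.mp (hMZ0 s hs)).2
    have h3 := hdom s hs
    have h4 := hUp0 s hs
    have h5 := hU00 s hs
    have h6 := hUm0 s hs
    have hpos : 0 < Up s := by
      rcases h4.lt_or_eq with h7 | h7
      · exact h7
      · exfalso
        have : U0 s ≤ 0 := by
          by_contra hc
          push Not at hc
          have : 0 < 8 * ε * U0 s := by positivity
          linarith
        have h8 : U0 s = 0 := le_antisymm this h5
        rw [h8, ← h7] at h3
        simp at h3
        linarith
    have hm : Um s ≤ (1 / 50) * (U0 s + Up s) :=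
      h3.le.trans (mul_le_mul_of_nonneg_right (by linarith) (by linarith))
    have hS : ε * (Up s + U0 s + Um s) ≤ ε * ((51 / 50) * (U0 s + Up s)) :=
      mul_le_mul_of_nonneg_left (by linarith) hε.le
    have hP : ε * Up s ≤ 1 / 100 * Up s := mul_le_mul_of_nonneg_right hε' h4
    have hT : ε * (Up s + U0 s + Um s) ≤ 0.14 * Up s := by nlinarith
    have hT0 : 0 ≤ ε * (Up s + U0 s + Um s) := by positivity
    have h9 : 8 * ε * deriv U0 s ≤ 8 * ε * (ε * (Up s + U0 s + Um s)) :=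
      mul_le_mul_of_nonneg_left h2 (by positivity)
    have h10 : 8 * ε * (ε * (Up s + U0 s + Um s)) ≤ 0.08 * (ε * (Up s + U0 s + Um s)) :=
      mul_le_mul_of_nonneg_right (by linarith) hT0
    linarith
  intro t ht
  by_contra hc
  push Not at hc
  have hd : ∀ s ≤ τ₀, HasDerivAt (fun x => Up x - 8 * ε * U0 x)
      (deriv Up s - 8 * ε * deriv U0 s) s := fun s hs =>
    (hUpdiff s hs).hasDerivAt.sub ((hU0diff s hs).hasDerivAt.const_mul _)
  obtain ⟨s, hs, hmax⟩ := isCompact_Icc.exists_isMaxOn (Set.nonempty_Icc.mpr ht)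
    (fun x hx => ((hd x hx.2).continuousAt.continuousWithinAt : ContinuousWithinAt
      (fun x => Up x - 8 * ε * U0 x) (Set.Icc t τ₀) x))
  have h0 : Up t - 8 * ε * U0 t ≤ Up s - 8 * ε * U0 s := hmax (Set.left_mem_Icc.mpr ht)
  have hlt : s < τ₀ := by
    rcases hs.2.lt_or_eq with h | h
    · exact h
    · rw [h] at h0
      linarith
  have hp := key s hs.2 (by linarith)
  have hev := ((hasDerivAt_iff_tendsto_slope.mp (hd s hs.2)).eventually_const_lt hp).filter_mono
    (nhdsWithin_mono s (fun x (hx : x ∈ Set.Ioi s) => (ne_of_gt hx : x ≠ s)) :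
      nhdsWithin s (Set.Ioi s) ≤ _)
  have hev2 : ∀ᶠ x in nhdsWithin s (Set.Ioi s), x ∈ Set.Ioo s τ₀ := Ioo_mem_nhdsGT hlt
  obtain ⟨x, hx1, hx2⟩ := (hev.and hev2).exists
  have hx3 : Up x - 8 * ε * U0 x ≤ Up s - 8 * ε * U0 s := hmax ⟨hs.1.trans hx2.1.le, hx2.2.le⟩
  rw [slope_def_field] at hx1
  have hx4 : 0 < x - s := sub_pos.mpr hx2.1
  have := (div_pos_iff_of_pos_right hx4).mp hx1
  linarith
end

section
/- Let γ > 0 and τ⋆ ∈ ℝ. Let α : (−∞,τ⋆] → ℝ be differentiable and set β(τ) := sup_{σ ≤ τ} |α(σ)|. Assume: β(τ) is finite and strictly positive for every τ ≤ τ⋆; β(τ) → 0 as τ → −∞; and |α′(τ) + γ·α(τ)²| ≤ (γ/10)·β(τ)² for all τ ≤ τ⋆. Then α(τ) = −β(τ) for all τ ≤ τ⋆; in particular α is everywhere negative and |α| is nondecreasing on (−∞,τ⋆]. -/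
open Filter

/-- The running supremum `β(τ) = sup_{σ ≤ τ} |α(σ)|`. -/
noncomputable def runSup (α : ℝ → ℝ) (τ : ℝ) : ℝ :=
  sSup ((fun σ => |α σ|) '' Set.Iic τ)

theorem slope_neg_aux (α : ℝ → ℝ) (x : ℝ) (hd : DifferentiableAt ℝ α x) (hn : deriv α x < 0) :
    ∀ᶠ s in nhdsWithin x {x}ᶜ, slope α x s < 0 :=
  (hasDerivAt_iff_tendsto_slope.1 hd.hasDerivAt).eventually (gt_mem_nhds hn)

/-- Sign and monotonicity step in the proof of inwards quadratic bending: if `α` satisfies the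
Riccati-type inequality `|α′ + γα²| ≤ (γ/10)β²` with `β` the running sup of `|α|`, which is
finite, positive and tends to `0` at `−∞`, then `α = −β`; in particular `α` is negative and
`|α|` is nondecreasing. -/
theorem stmt_4 (γ τs : ℝ) (hγ : 0 < γ) (α : ℝ → ℝ)
    (hdiff : ∀ τ ≤ τs, DifferentiableAt ℝ α τ)
    (hbdd : ∀ τ ≤ τs, BddAbove ((fun σ => |α σ|) '' Set.Iic τ))
    (hpos : ∀ τ ≤ τs, 0 < runSup α τ)
    (hlim : Tendsto (runSup α) atBot (nhds 0))
    (hode : ∀ τ ≤ τs, |deriv α τ + γ * (α τ) ^ 2| ≤ γ / 10 * (runSup α τ) ^ 2) :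
    (∀ τ ≤ τs, α τ = -runSup α τ) ∧
    (∀ τ ≤ τs, α τ < 0) ∧
    (∀ σ τ : ℝ, σ ≤ τ → τ ≤ τs → |α σ| ≤ |α τ|) := by
  have hle : ∀ τ ≤ τs, ∀ s ≤ τ, |α s| ≤ runSup α τ := fun τ hτ s hs =>
    le_csSup (hbdd τ hτ) ⟨s, hs, rfl⟩
  have key : ∀ τ ≤ τs, α τ = -runSup α τ := by
    intro τ hτ
    have hb := hpos τ hτ
    obtain ⟨T, hT, hTτ⟩ :=
      ((hlim.eventually (gt_mem_nhds hb)).and (eventually_le_atBot τ)).exists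
    have hcont : ContinuousOn (fun σ => |α σ|) (Set.Icc T τ) := fun s hs =>
      ((hdiff s (hs.2.trans hτ)).continuousAt.abs).continuousWithinAt
    obtain ⟨σ, hσ, hmax⟩ := isCompact_Icc.exists_isMaxOn ⟨T, le_rfl, hTτ⟩ hcont
    have hσs : σ ≤ τs := hσ.2.trans hτ
    have hge : runSup α τ ≤ |α σ| := by
      by_contra! hlt
      have : runSup α τ ≤ max (|α σ|) (runSup α T) := by
        refine csSup_le ⟨_, τ, Set.self_mem_Iic, rfl⟩ ?_
        rintro _ ⟨s, hs, rfl⟩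
        rcases le_total T s with h | h
        · exact le_max_of_le_left (hmax ⟨h, hs⟩)
        · exact le_max_of_le_right (hle T (hTτ.trans hτ) s h)
      exact absurd this (not_le.2 (max_lt hlt hT))
    have heq : |α σ| = runSup α τ := le_antisymm (hle τ hτ σ hσ.2) hge
    have heq2 : runSup α σ = runSup α τ := by
      apply le_antisymm
      · refine csSup_le ⟨_, σ, Set.self_mem_Iic, rfl⟩ ?_
        rintro _ ⟨s, hs, rfl⟩
        exact hle τ hτ s (le_trans hs hσ.2)
      · exact heq ▸ hle σ hσs σ le_rfl
    have hd : deriv α σ < 0 := by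
      have h := (abs_le.1 (hode σ hσs)).2
      rw [heq2, ← sq_abs (α σ), heq] at h
      have : 0 < γ * runSup α τ ^ 2 := by positivity
      linarith
    have hev := slope_neg_aux α σ (hdiff σ hσs) hd
    have hneg : α σ = -runSup α τ := by
      rcases eq_or_eq_neg_of_abs_eq heq with h | h
      · exfalso
        have hev' := hev.filter_mono (nhdsWithin_mono σ
          (show Set.Iio σ ⊆ {σ}ᶜ from fun s hs => ne_of_lt hs))
        obtain ⟨s, hs, hsσ⟩ := (hev'.and self_mem_nhdsWithin).exists
        have hsσ : s < σ := hsσ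
        rw [slope_def_field, div_neg_iff] at hs
        have := (abs_le.1 (hle τ hτ s (hsσ.le.trans hσ.2))).2
        rcases hs with hs | hs <;> linarith [hs.1, hs.2]
      · exact h
    rcases hσ.2.eq_or_lt with h | h
    · rw [← h, hneg, h]
    · exfalso
      have hev' := hev.filter_mono (nhdsWithin_mono σ
        (show Set.Ioi σ ⊆ {σ}ᶜ from fun s hs => ne_of_gt hs))
      obtain ⟨s, ⟨hs, hsσ⟩, hsτ⟩ := ((hev'.and self_mem_nhdsWithin).and
        (mem_nhdsWithin_of_mem_nhds (Iio_mem_nhds h))).exists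
      have hsσ : σ < s := hsσ
      have hsτ : s < τ := hsτ
      rw [slope_def_field, div_neg_iff] at hs
      have := (abs_le.1 (hle τ hτ s hsτ.le)).1
      rcases hs with hs | hs <;> linarith [hs.1, hs.2]
  refine ⟨key, fun τ hτ => ?_, fun σ τ h hτ => ?_⟩
  · rw [key τ hτ]; linarith [hpos τ hτ]
  · have := hle τ hτ σ h
    rw [key τ hτ, abs_neg, abs_of_pos (hpos τ hτ)]
    exact this
end

section
/- Let γ > 0 and τ⋆ < 0. Let α : (−∞,τ⋆] → ℝ be differentiable with α(τ) < 0 for all τ ≤ τ⋆, and suppose that for every ε > 0 there exists τ_ε ≤ τ⋆ such that |α′(τ) + γ·α(τ)²| ≤ ε·α(τ)² for all τ ≤ τ_ε. Then τ·α(τ) → 1/γ as τ → −∞. -/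
open Filter

/-- ODE-integration step of the inwards quadratic bending theorem: a negative differentiable
function satisfying `α′ = −γα² + o(α²)` as `τ → −∞` has the asymptotics `τ·α(τ) → 1/γ`. -/
theorem stmt_5 (γ τs : ℝ) (hγ : 0 < γ) (hτs : τs < 0) (α : ℝ → ℝ)
    (hdiff : ∀ τ ≤ τs, DifferentiableAt ℝ α τ)
    (hneg : ∀ τ ≤ τs, α τ < 0)
    (hode : ∀ ε : ℝ, 0 < ε → ∃ τε ≤ τs, ∀ τ ≤ τε,
      |deriv α τ + γ * (α τ) ^ 2| ≤ ε * (α τ) ^ 2) :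
    Tendsto (fun τ => τ * α τ) atBot (nhds (1 / γ)) := by
  have key : Tendsto (fun τ => (α τ)⁻¹ / τ) atBot (nhds γ) := by
    rw [Metric.tendsto_nhds]
    intro e he
    obtain ⟨T, hT, hb⟩ := hode (e / 3) (by positivity)
    have hd : ∀ x ∈ Set.Iic T, HasDerivWithinAt (fun τ => (α τ)⁻¹ - γ * τ)
        (-deriv α x / (α x) ^ 2 - γ * 1) (Set.Iic T) x := by
      intro x hx
      have hx' : x ≤ τs := le_trans hx hT
      exact (((hdiff x hx').hasDerivAt.fun_inv (hneg x hx').ne).sub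
        ((hasDerivAt_id x).const_mul γ)).hasDerivWithinAt
    have hbound : ∀ x ∈ Set.Iic T, ‖-deriv α x / (α x) ^ 2 - γ * 1‖ ≤ e / 3 := by
      intro x hx
      have hne : α x ≠ 0 := (hneg x (le_trans hx hT)).ne
      have hpos : 0 < (α x) ^ 2 := by positivity
      have h1 : -deriv α x / (α x) ^ 2 - γ * 1
          = -((deriv α x + γ * (α x) ^ 2) / (α x) ^ 2) := by
        field_simp
        ring
      rw [h1, norm_neg, Real.norm_eq_abs, abs_div, abs_of_pos hpos, div_le_iff₀ hpos]
      exact hb x hx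
    have hT0 : T < 0 := lt_of_le_of_lt hT hτs
    set C := |(α T)⁻¹ - γ * T| with hC
    filter_upwards [eventually_le_atBot T, eventually_le_atBot (-(C / (e / 3)))] with x hx hx2
    have hm := (convex_Iic T).norm_image_sub_le_of_norm_hasDerivWithin_le hd hbound
      (Set.mem_Iic.2 le_rfl) (Set.mem_Iic.2 hx)
    simp only [Real.norm_eq_abs] at hm
    have hx0 : x < 0 := lt_of_le_of_lt hx hT0
    have hC2 : C ≤ (e / 3) * (-x) := by
      have : C / (e / 3) ≤ -x := by linarith
      rw [div_le_iff₀ (by positivity)] at this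
      linarith
    have h3 : |x - T| = T - x := by rw [abs_of_nonpos (by linarith)]; ring
    rw [h3] at hm
    have h4 : |(α x)⁻¹ - γ * x| < e * (-x) := by
      have h5 := abs_sub_abs_le_abs_sub ((α x)⁻¹ - γ * x) ((α T)⁻¹ - γ * T)
      have : e / 3 * T < 0 := mul_neg_of_pos_of_neg (by positivity) hT0
      have : e * x < 0 := mul_neg_of_pos_of_neg he hx0
      rw [← hC] at h5
      linarith
    rw [Real.dist_eq]
    have h6 : (α x)⁻¹ / x - γ = ((α x)⁻¹ - γ * x) / x := by
      have := hx0.ne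
      rw [sub_div, mul_div_cancel_right₀ _ this]
    rw [h6, abs_div, abs_of_neg hx0, div_lt_iff₀ (by linarith)]
    exact h4
  have := key.inv₀ hγ.ne'
  rw [one_div]
  refine this.congr fun x => ?_
  rw [inv_div, div_inv_eq_mul]
end

section
/- Let γ > 0, ε ≥ 0 and τ ≤ τ₀ be real numbers. Let α : [τ,τ₀] → ℝ be differentiable with α(s) < 0 for all s ∈ [τ,τ₀], and suppose |α′(s) + γ·α(s)²| ≤ ε·α(s)² for all s ∈ [τ,τ₀]. Then (γ − ε)·(τ₀ − τ) ≤ 1/α(τ₀) − 1/α(τ) ≤ (γ + ε)·(τ₀ − τ). -/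
/-- Backward integration of the Riccati-type differential inequality: if `α < 0` on `[τ, τ₀]`
and `|α′ + γα²| ≤ εα²` there, then `(γ−ε)(τ₀−τ) ≤ 1/α(τ₀) − 1/α(τ) ≤ (γ+ε)(τ₀−τ)`. -/
theorem stmt_6 (γ ε τ τ₀ : ℝ) (hγ : 0 < γ) (hε : 0 ≤ ε) (hττ₀ : τ ≤ τ₀)
    (α : ℝ → ℝ)
    (hdiff : ∀ s ∈ Set.Icc τ τ₀, DifferentiableAt ℝ α s)
    (hneg : ∀ s ∈ Set.Icc τ τ₀, α s < 0)
    (hode : ∀ s ∈ Set.Icc τ τ₀, |deriv α s + γ * (α s) ^ 2| ≤ ε * (α s) ^ 2) :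
    (γ - ε) * (τ₀ - τ) ≤ 1 / α τ₀ - 1 / α τ ∧
      1 / α τ₀ - 1 / α τ ≤ (γ + ε) * (τ₀ - τ) := by
  have hd : ∀ s ∈ Set.Icc τ τ₀,
      HasDerivAt (fun t => 1 / α t) (-deriv α s / (α s) ^ 2) s := by
    intro s hs
    simpa only [one_div] using (hdiff s hs).hasDerivAt.fun_inv (hneg s hs).ne
  have hc : ContinuousOn (fun t => 1 / α t) (Set.Icc τ τ₀) :=
    fun s hs => (hd s hs).continuousAt.continuousWithinAt
  have hD : DifferentiableOn ℝ (fun t => 1 / α t) (interior (Set.Icc τ τ₀)) :=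
    fun s hs => (hd s (interior_subset hs)).differentiableAt.differentiableWithinAt
  have hl : τ ∈ Set.Icc τ τ₀ := ⟨le_rfl, hττ₀⟩
  have hr : τ₀ ∈ Set.Icc τ τ₀ := ⟨hττ₀, le_rfl⟩
  constructor
  · refine (convex_Icc τ τ₀).mul_sub_le_image_sub_of_le_deriv hc hD ?_ τ hl τ₀ hr hττ₀
    intro s hs
    have hs' := interior_subset hs
    have hp : 0 < (α s) ^ 2 := sq_pos_of_ne_zero (hneg s hs').ne
    rw [(hd s hs').deriv, le_div_iff₀ hp]
    have := (abs_le.mp (hode s hs')).2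
    linarith
  · refine (convex_Icc τ τ₀).image_sub_le_mul_sub_of_deriv_le hc hD ?_ τ hl τ₀ hr hττ₀
    intro s hs
    have hs' := interior_subset hs
    have hp : 0 < (α s) ^ 2 := sq_pos_of_ne_zero (hneg s hs').ne
    rw [(hd s hs').deriv, div_le_iff₀ hp]
    have := (abs_le.mp (hode s hs')).1
    linarith
end

section
/- Let γ > 0 and κ ∈ (0,1] with γκ ≤ 1/2, and let τ₀ ≤ −1. Let α : (−∞,τ₀] → ℝ be differentiable and let m : (−∞,τ₀] → (0,∞) satisfy m(τ) ≤ 1/(2γ|τ|) for all τ ≤ τ₀. Assume: (i) |α′(τ) + γ·α(τ)²| ≤ (γ²κ/2)·α(τ)² for every τ ≤ τ₀ at which |α(τ)| ≥ m(τ); and (ii) α(τ₀) ≠ 0 with |1/α(τ₀) − γτ₀| ≤ (γ²κ/2)·|τ₀|. Then for every τ ≤ τ₀ one has α(τ) < 0, |1/α(τ) − γτ| ≤ (γ²κ/2)·|τ|, and |α(τ) − 1/(γτ)| ≤ (3κ/4)/|τ|. -/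
/-- Continuation argument: the Riccati-type differential inequality, available only where `|α|`
lies above the threshold `m`, together with the initial bound `|1/α(τ₀) − γτ₀| ≤ (γ²κ/2)|τ₀|`,
propagates to all earlier times and keeps `α` negative. -/
theorem stmt_7 (γ κ τ₀ : ℝ) (hγ : 0 < γ) (hκ : 0 < κ) (hκ1 : κ ≤ 1) (hγκ : γ * κ ≤ 1 / 2)
    (hτ₀ : τ₀ ≤ -1) (α m : ℝ → ℝ)
    (hdiff : ∀ τ ≤ τ₀, DifferentiableAt ℝ α τ)
    (hmpos : ∀ τ ≤ τ₀, 0 < m τ)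
    (hmsmall : ∀ τ ≤ τ₀, m τ ≤ 1 / (2 * γ * |τ|))
    (hode : ∀ τ ≤ τ₀, m τ ≤ |α τ| →
      |deriv α τ + γ * (α τ) ^ 2| ≤ γ ^ 2 * κ / 2 * (α τ) ^ 2)
    (hα₀ : α τ₀ ≠ 0)
    (hinit : |1 / α τ₀ - γ * τ₀| ≤ γ ^ 2 * κ / 2 * |τ₀|) :
    ∀ τ ≤ τ₀, α τ < 0 ∧ |1 / α τ - γ * τ| ≤ γ ^ 2 * κ / 2 * |τ| ∧
      |α τ - 1 / (γ * τ)| ≤ 3 * κ / 4 / |τ| := by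
  obtain ⟨c, hc⟩ : ∃ c, c = γ ^ 2 * κ / 2 := ⟨_, rfl⟩
  simp only [← hc] at hode hinit ⊢
  have hc0 : 0 < c := by rw [hc]; positivity
  have hc4 : c ≤ γ / 4 := by rw [hc]; nlinarith
  have hB : ∀ s ≤ τ₀, α s ≠ 0 → |1 / α s - γ * s| ≤ c * |s| →
      α s < 0 ∧ 3 / 4 * (γ * α s * s) ≤ 1 ∧ 1 ≤ 5 / 4 * (γ * α s * s) := by
    intro s hs h0 h
    have hs0 : s < 0 := by linarith
    rw [abs_of_neg hs0, abs_le] at h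
    have hneg : 1 / α s < 0 := by nlinarith
    have ha : α s < 0 := by
      rcases lt_or_gt_of_ne h0 with h1 | h1
      · exact h1
      · have : 0 < 1 / α s := by positivity
        linarith
    have e : 1 / α s * α s = 1 := by field_simp
    have h1 : 1 / α s ≤ 3 / 4 * (γ * s) := by nlinarith
    have h2 : 5 / 4 * (γ * s) ≤ 1 / α s := by nlinarith
    refine ⟨ha, ?_, ?_⟩ <;> nlinarith
  have hA : ∀ s ≤ τ₀, (∀ t ∈ Set.Icc s τ₀, 1 / 2 ≤ γ * α t * t) →
      α s ≠ 0 ∧ |1 / α s - γ * s| ≤ c * |s| := by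
    intro s hs h
    have hne : ∀ t ∈ Set.Icc s τ₀, α t ≠ 0 := by
      intro t ht h0
      have := h t ht
      rw [h0] at this
      norm_num at this
    have hm : ∀ t ∈ Set.Icc s τ₀, m t ≤ |α t| := by
      intro t ht
      have ht0 : t < 0 := by linarith [ht.2]
      refine (hmsmall t ht.2).trans ?_
      have hp : 0 < |t| := abs_pos.mpr ht0.ne
      rw [div_le_iff₀ (by positivity)]
      have h1 := h t ht
      have h2 : α t * t ≤ |α t| * |t| := by rw [← abs_mul]; exact le_abs_self _
      nlinarith
    have hd : ∀ t ∈ Set.Icc s τ₀, HasDerivWithinAt (fun x => 1 / α x - γ * x)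
        (-(deriv α t) / (α t) ^ 2 - γ) (Set.Icc s τ₀) t := by
      intro t ht
      have h1 := ((hdiff t ht.2).hasDerivAt.inv (hne t ht)).sub ((hasDerivAt_id t).const_mul γ)
      have h2 : HasDerivAt (fun x => 1 / α x - γ * x) (-(deriv α t) / (α t) ^ 2 - γ) t := by
        have e1 : (fun x => 1 / α x - γ * x) = α⁻¹ - fun y => γ * id y := by
          ext x; simp
        rw [e1]
        simpa using h1
      exact h2.hasDerivWithinAt
    have hb : ∀ t ∈ Set.Icc s τ₀, ‖-(deriv α t) / (α t) ^ 2 - γ‖ ≤ c := by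
      intro t ht
      have h0 := hne t ht
      have hp : 0 < (α t) ^ 2 := by positivity
      have e : -(deriv α t) / (α t) ^ 2 - γ = -((deriv α t + γ * (α t) ^ 2) / (α t) ^ 2) := by
        field_simp
        ring
      rw [e, norm_neg, Real.norm_eq_abs, abs_div, abs_of_pos hp, div_le_iff₀ hp]
      exact hode t ht.2 (hm t ht)
    have hmv := (convex_Icc s τ₀).norm_image_sub_le_of_norm_hasDerivWithin_le hd hb
      (Set.right_mem_Icc.mpr hs) (Set.left_mem_Icc.mpr hs)
    refine ⟨hne s (Set.left_mem_Icc.mpr hs), ?_⟩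
    simp only [Real.norm_eq_abs] at hmv
    rw [abs_of_nonpos (by linarith : s - τ₀ ≤ 0)] at hmv
    rw [abs_of_neg (by linarith : τ₀ < 0)] at hinit
    rw [abs_of_neg (by linarith : s < 0)]
    rw [abs_le] at *
    constructor <;> linarith [hmv.1, hmv.2, hinit.1, hinit.2]
  have hcont : ∀ T, ContinuousOn (fun t => γ * α t * t) (Set.Icc T τ₀) := by
    intro T t ht
    have := (hdiff t ht.2).continuousAt
    exact ((continuousAt_const.mul this).mul continuousAt_id).continuousWithinAt
  have hall : ∀ t ≤ τ₀, 1 / 2 < γ * α t * t := by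
    intro T hT
    by_contra! hbad
    have hK : IsCompact (Set.Icc T τ₀ ∩ (fun t => γ * α t * t) ⁻¹' Set.Iic (1 / 2)) :=
      isCompact_Icc.of_isClosed_subset
        ((hcont T).preimage_isClosed_of_isClosed isClosed_Icc isClosed_Iic)
        Set.inter_subset_left
    obtain ⟨s, ⟨hsI, hs2⟩, hsup⟩ := hK.exists_isGreatest ⟨T, ⟨le_rfl, hT⟩, hbad⟩
    have hs2' : γ * α s * s ≤ 1 / 2 := hs2
    have h0 := (hB τ₀ le_rfl hα₀ hinit).2.2
    have hs : 1 / 2 ≤ γ * α s * s := by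
      obtain ⟨u, hu, hu2⟩ := intermediate_value_Icc hsI.2 (hcont s)
        (⟨hs2', by linarith⟩ : (1 / 2 : ℝ) ∈ Set.Icc (γ * α s * s) (γ * α τ₀ * τ₀))
      have hu3 : γ * α u * u = 1 / 2 := hu2
      have : u ≤ s := hsup ⟨⟨hsI.1.trans hu.1, hu.2⟩, hu3.le⟩
      have : u = s := le_antisymm this hu.1
      rw [← this, hu3]
    have hA' := hA s hsI.2 (by
      intro t ht
      by_contra! hlt
      have : t ≤ s := hsup ⟨⟨hsI.1.trans ht.1, ht.2⟩, hlt.le⟩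
      have : t = s := le_antisymm this ht.1
      rw [this] at hlt
      linarith)
    have := (hB s hsI.2 hA'.1 hA'.2).2.2
    linarith
  intro τ hτ
  obtain ⟨h0, h1⟩ := hA τ hτ (fun t ht => (hall t ht.2).le)
  obtain ⟨ha, h2, h3⟩ := hB τ hτ h0 h1
  refine ⟨ha, h1, ?_⟩
  have hτ0 : τ < 0 := by linarith
  have hp : 0 < |τ| := abs_pos.mpr hτ0.ne
  have hτne : τ ≠ 0 := hτ0.ne
  have e : α τ - 1 / (γ * τ) = -(1 / α τ - γ * τ) * (α τ / (γ * τ)) := by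
    field_simp
    ring
  have hq : 0 < α τ / (γ * τ) := div_pos_of_neg_of_neg ha (by nlinarith)
  rw [e, abs_mul, abs_neg, abs_of_pos hq, le_div_iff₀ hp]
  have h4 : |1 / α τ - γ * τ| * (α τ / (γ * τ)) * |τ| ≤ c * |τ| * (α τ / (γ * τ)) * |τ| := by
    gcongr
  refine h4.trans ?_
  have e2 : c * |τ| * (α τ / (γ * τ)) * |τ| = κ / 2 * (γ * α τ * τ) := by
    rw [abs_of_neg hτ0, hc]
    field_simp
  rw [e2]
  nlinarith
end

section
/- Let Ω ⊆ ℝ × (−∞,0) be open and let V : Ω → ℝ be a positive C² function satisfying, at every (x,t) ∈ Ω, the equation V_t = ((1 + V_t²)·V_xx + (1 + V_x²)·V_tt − 2·V_x·V_t·V_xt)/(1 + V_x² + V_t²) − 1/V. Define v(y,τ) := e^{τ/2}·V(e^{−τ/2}·y, −e^{−τ}) on Ω′ := {(y,τ) ∈ ℝ² : (e^{−τ/2}·y, −e^{−τ}) ∈ Ω}. Then v satisfies the renormalized translator equation v_τ = v_yy/(1 + v_y²) − (y/2)·v_y + v/2 − 1/v + e^τ·N[v] at every point of Ω′. -/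
noncomputable section

/-- Partial derivative in the first variable. -/
def pdy (f : ℝ × ℝ → ℝ) (p : ℝ × ℝ) : ℝ := deriv (fun s => f (s, p.2)) p.1

/-- Partial derivative in the second variable. -/
def pdτ (f : ℝ × ℝ → ℝ) (p : ℝ × ℝ) : ℝ := deriv (fun s => f (p.1, s)) p.2

/-- The nonlinear term `N[v]` in the renormalized translator equation. -/
def Nop (v : ℝ × ℝ → ℝ) (p : ℝ × ℝ) : ℝ :=
  (pdy v p * (pdτ v p - v p / 2) - p.1 / 2) ^ 2 * pdy (pdy v) p /
      ((1 + (pdy v p) ^ 2) *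
        (1 + (pdy v p) ^ 2 + Real.exp p.2 * (pdτ v p + p.1 / 2 * pdy v p - v p / 2) ^ 2))
    + ((1 + (pdy v p) ^ 2) * pdτ (pdτ v) p
        - 2 * (pdy v p * (pdτ v p - v p / 2) - p.1 / 2) * pdτ (pdy v) p
        + 1 / 4 * (1 + (pdy v p) ^ 2) * (p.1 * pdy v p - v p)) /
      (1 + (pdy v p) ^ 2 + Real.exp p.2 * (pdτ v p + p.1 / 2 * pdy v p - v p / 2) ^ 2)

/-- The renormalized translator equation
`v_τ = v_yy/(1+v_y²) − (y/2)v_y + v/2 − 1/v + e^τ N[v]`. -/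
def RenormEq (v : ℝ × ℝ → ℝ) (p : ℝ × ℝ) : Prop :=
  pdτ v p = pdy (pdy v) p / (1 + (pdy v p) ^ 2) - p.1 / 2 * pdy v p + v p / 2 - 1 / v p
    + Real.exp p.2 * Nop v p

lemma pd_chain (f : ℝ × ℝ → ℝ) (a b : ℝ → ℝ) (da db s : ℝ)
    (hf : DifferentiableAt ℝ f (a s, b s)) (ha : HasDerivAt a da s) (hb : HasDerivAt b db s) :
    HasDerivAt (fun s => f (a s, b s)) (da * fderiv ℝ f (a s, b s) (1, 0)
      + db * fderiv ℝ f (a s, b s) (0, 1)) s := by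
  have h := hf.hasFDerivAt.comp_hasDerivAt s (ha.prodMk hb)
  have e : ((da, db) : ℝ × ℝ) = da • ((1, 0) : ℝ × ℝ) + db • ((0, 1) : ℝ × ℝ) := by
    ext <;> simp
  rw [e, map_add, map_smul, map_smul] at h
  exact h

lemma pdy_eq (f : ℝ × ℝ → ℝ) (p : ℝ × ℝ) (hf : DifferentiableAt ℝ f p) :
    pdy f p = fderiv ℝ f p (1, 0) := by
  have h := pd_chain f (fun s => s) (fun _ => p.2) 1 0 p.1 hf (hasDerivAt_id _)
    (hasDerivAt_const _ _)
  simpa [pdy] using h.deriv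

lemma pdt_eq (f : ℝ × ℝ → ℝ) (p : ℝ × ℝ) (hf : DifferentiableAt ℝ f p) :
    pdτ f p = fderiv ℝ f p (0, 1) := by
  have h := pd_chain f (fun _ => p.1) (fun s => s) 0 1 p.2 hf
    (hasDerivAt_const _ _) (hasDerivAt_id _)
  simpa [pdτ] using h.deriv

lemma pd_chain_two (f : ℝ × ℝ → ℝ) (a b : ℝ → ℝ) (da db s : ℝ)
    (hf : DifferentiableAt ℝ f (a s, b s)) (ha : HasDerivAt a da s) (hb : HasDerivAt b db s) :
    HasDerivAt (fun s => f (a s, b s)) (da * pdy f (a s, b s) + db * pdτ f (a s, b s)) s := by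
  rw [pdy_eq f _ hf, pdt_eq f _ hf]
  exact pd_chain f a b da db s hf ha hb

lemma pd_second (V : ℝ × ℝ → ℝ) (p : ℝ × ℝ) (h : ContDiffAt ℝ 2 V p) :
    DifferentiableAt ℝ (pdy V) p ∧ DifferentiableAt ℝ (pdτ V) p ∧
      pdy (pdτ V) p = pdτ (pdy V) p := by
  have hev : ∀ᶠ z in nhds p, DifferentiableAt ℝ V z := by
    filter_upwards [h.eventually (by simp)] with z hz
    exact hz.differentiableAt (by norm_num)
  have hG : DifferentiableAt ℝ (fderiv ℝ V) p :=
    (h.fderiv_right (m := 1) (by norm_num)).differentiableAt (by norm_num)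
  have e1 : pdy V =ᶠ[nhds p] fun z => fderiv ℝ V z (1, 0) := by
    filter_upwards [hev] with z hz using pdy_eq V z hz
  have e2 : pdτ V =ᶠ[nhds p] fun z => fderiv ℝ V z (0, 1) := by
    filter_upwards [hev] with z hz using pdt_eq V z hz
  have d : ∀ w : ℝ × ℝ, HasFDerivAt (fun z => fderiv ℝ V z w)
      ((fderiv ℝ (fderiv ℝ V) p).flip w) p := fun w => by
    have := hG.hasFDerivAt.clm_apply (hasFDerivAt_const w p)
    simpa using this
  have d1 := (d (1, 0)).congr_of_eventuallyEq e1
  have d2 := (d (0, 1)).congr_of_eventuallyEq e2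
  refine ⟨d1.differentiableAt, d2.differentiableAt, ?_⟩
  rw [pdy_eq _ _ d2.differentiableAt, pdt_eq _ _ d1.differentiableAt, d1.fderiv, d2.fderiv]
  have hs : IsSymmSndFDerivAt ℝ V p := h.isSymmSndFDerivAt (by simp)
  simpa using hs (1, 0) (0, 1)

lemma alg_final (E y u p t X M T : ℝ) (hE : 0 < E) (hu : 0 < u)
    (h : t = ((1 + t ^ 2) * X + (1 + p ^ 2) * T - 2 * p * t * M) / (1 + p ^ 2 + t ^ 2) - 1 / u)
    (v vt vyy vyt vtt : ℝ) (hv : v = E * u) (hvt : vt = v / 2 - y / 2 * p + E⁻¹ * t)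
    (hvyy : vyy = E⁻¹ * X)
    (hvyt : vyt = -(y / 2) * E⁻¹ * X + (E⁻¹) ^ 2 * M)
    (hvtt : vtt = vt / 2 - y / 2 * vyt - E⁻¹ / 2 * t
      + E⁻¹ * (-(y / 2) * E⁻¹ * M + (E⁻¹) ^ 2 * T)) :
    vt = vyy / (1 + p ^ 2) - y / 2 * p + v / 2 - 1 / v
    + E ^ 2 * ((p * (vt - v / 2) - y / 2) ^ 2 * vyy /
      ((1 + p ^ 2) * (1 + p ^ 2 + E ^ 2 * (vt + y / 2 * p - v / 2) ^ 2))
    + ((1 + p ^ 2) * vtt - 2 * (p * (vt - v / 2) - y / 2) * vyt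
        + 1 / 4 * (1 + p ^ 2) * (y * p - v)) /
      (1 + p ^ 2 + E ^ 2 * (vt + y / 2 * p - v / 2) ^ 2)) := by
  have hD : 1 + p ^ 2 + E ^ 2 * (vt + y / 2 * p - v / 2) ^ 2 = 1 + p ^ 2 + t ^ 2 := by
    rw [hvt]; field_simp; ring
  rw [hD]
  have hp : (1 + p ^ 2) ≠ 0 := by positivity
  have hpt : (1 + p ^ 2 + t ^ 2) ≠ 0 := by positivity
  have key : vyy / (1 + p ^ 2) + E ^ 2 * ((p * (vt - v / 2) - y / 2) ^ 2 * vyy /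
      ((1 + p ^ 2) * (1 + p ^ 2 + t ^ 2))
    + ((1 + p ^ 2) * vtt - 2 * (p * (vt - v / 2) - y / 2) * vyt
        + 1 / 4 * (1 + p ^ 2) * (y * p - v)) / (1 + p ^ 2 + t ^ 2))
      = E⁻¹ * (((1 + t ^ 2) * X + (1 + p ^ 2) * T - 2 * p * t * M) / (1 + p ^ 2 + t ^ 2)) := by
    rw [hvtt, hvyt, hvyy, hvt]
    field_simp
    ring
  have h1 : 1 / v = E⁻¹ * (1 / u) := by rw [hv]; field_simp
  rw [h1]
  linear_combination hvt + E⁻¹ * h - key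

/-- If the profile function `V` of the level sets of a translator satisfies its elliptic
equation, then the renormalized profile `v(y,τ) = e^{τ/2} V(e^{−τ/2}y, −e^{−τ})` satisfies the
renormalized translator equation. -/
theorem stmt_8 (Ω : Set (ℝ × ℝ)) (hopen : IsOpen Ω) (hsub : ∀ p ∈ Ω, p.2 < (0 : ℝ))
    (V : ℝ × ℝ → ℝ) (hC2 : ∀ p ∈ Ω, ContDiffAt ℝ 2 V p) (hpos : ∀ p ∈ Ω, 0 < V p)
    (hPDE : ∀ p ∈ Ω,
      pdτ V p = ((1 + (pdτ V p) ^ 2) * pdy (pdy V) p + (1 + (pdy V p) ^ 2) * pdτ (pdτ V) p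
          - 2 * pdy V p * pdτ V p * pdτ (pdy V) p) / (1 + (pdy V p) ^ 2 + (pdτ V p) ^ 2)
        - 1 / V p) :
    ∀ q : ℝ × ℝ, (Real.exp (-q.2 / 2) * q.1, -Real.exp (-q.2)) ∈ Ω →
      RenormEq (fun r => Real.exp (r.2 / 2) * V (Real.exp (-r.2 / 2) * r.1, -Real.exp (-r.2)))
        q := by
  have hxs : ∀ y τ : ℝ, HasDerivAt (fun s => Real.exp (-τ / 2) * s) (Real.exp (-τ / 2)) y :=
    fun y τ => by simpa using (hasDerivAt_id y).const_mul (Real.exp (-τ / 2))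
  have hneg : ∀ τ : ℝ, HasDerivAt (fun s : ℝ => Real.exp (-s / 2))
      (-(1 / 2) * Real.exp (-τ / 2)) τ := fun τ => by
    have := ((hasDerivAt_neg' τ).div_const 2).exp
    exact this.congr_deriv (by ring)
  have hexp : ∀ τ : ℝ, HasDerivAt (fun s : ℝ => Real.exp (s / 2))
      (1 / 2 * Real.exp (τ / 2)) τ := fun τ => by
    have := ((hasDerivAt_id' τ).div_const 2).exp
    exact this.congr_deriv (by ring)
  have hxt : ∀ y τ : ℝ, HasDerivAt (fun s => Real.exp (-s / 2) * y)
      (-(y / 2) * Real.exp (-τ / 2)) τ := fun y τ => by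
    exact ((hneg τ).mul_const y).congr_deriv (by ring)
  have htt : ∀ τ : ℝ, HasDerivAt (fun s : ℝ => -Real.exp (-s)) (Real.exp (-τ)) τ := fun τ => by
    have := (hasDerivAt_neg' τ).exp.fun_neg
    exact this.congr_deriv (by ring)
  have hEi : ∀ τ : ℝ, Real.exp (-τ / 2) = (Real.exp (τ / 2))⁻¹ := fun τ => by
    rw [← Real.exp_neg]; congr 1; ring
  have hE2 : ∀ τ : ℝ, Real.exp τ = Real.exp (τ / 2) ^ 2 := fun τ => by
    rw [← Real.exp_nat_mul]; congr 1; push_cast; ring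
  have hEi2 : ∀ τ : ℝ, Real.exp (-τ) = (Real.exp (τ / 2))⁻¹ ^ 2 := fun τ => by
    rw [Real.exp_neg, hE2, inv_pow]
  have hdV : ∀ p ∈ Ω, DifferentiableAt ℝ V p := fun p hp =>
    (hC2 p hp).differentiableAt (by norm_num)
  set v : ℝ × ℝ → ℝ :=
    fun r => Real.exp (r.2 / 2) * V (Real.exp (-r.2 / 2) * r.1, -Real.exp (-r.2)) with hv
  set Φ : ℝ × ℝ → ℝ × ℝ := fun r => (Real.exp (-r.2 / 2) * r.1, -Real.exp (-r.2)) with hΦ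
  have hΦc : Continuous Φ := by rw [hΦ]; fun_prop
  have vy : ∀ r, Φ r ∈ Ω → pdy v r = pdy V (Φ r) := by
    intro r hr
    have h := (pd_chain_two V (fun s => Real.exp (-r.2 / 2) * s) (fun _ => -Real.exp (-r.2)) _ _ r.1
      (hdV _ hr) (hxs _ _) (hasDerivAt_const _ _)).const_mul (Real.exp (r.2 / 2))
    refine h.deriv.trans ?_
    have := (Real.exp_pos (r.2 / 2)).ne'
    rw [hEi r.2]
    simp only [hΦ, hEi r.2]
    field_simp
    ring
  have vt : ∀ r, Φ r ∈ Ω → pdτ v r = v r / 2 - r.1 / 2 * pdy V (Φ r)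
      + Real.exp (-r.2 / 2) * pdτ V (Φ r) := by
    intro r hr
    have h := (hexp r.2).mul (pd_chain_two V (fun s => Real.exp (-s / 2) * r.1)
      (fun s => -Real.exp (-s)) _ _ r.2 (hdV _ hr) (hxt _ _) (htt _))
    refine h.deriv.trans ?_
    have := (Real.exp_pos (r.2 / 2)).ne'
    simp only [hΦ, hv, hEi r.2, hEi2 r.2]
    field_simp
    ring
  intro q hq
  change Φ q ∈ Ω at hq
  have hev : ∀ᶠ r in nhds q, Φ r ∈ Ω := (hopen.preimage hΦc).mem_nhds hq
  have hev1 : ∀ᶠ s in nhds q.1, Φ (s, q.2) ∈ Ω :=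
    (show Continuous fun s : ℝ => (s, q.2) by fun_prop).continuousAt (x := q.1) |>.eventually hev
  have hev2 : ∀ᶠ s in nhds q.2, Φ (q.1, s) ∈ Ω :=
    (show Continuous fun s : ℝ => (q.1, s) by fun_prop).continuousAt (x := q.2) |>.eventually hev
  obtain ⟨dy, dt, hsym⟩ := pd_second V (Φ q) (hC2 _ hq)
  have vyy : pdy (pdy v) q = Real.exp (-q.2 / 2) * pdy (pdy V) (Φ q) := by
    have h := pd_chain_two (pdy V) (fun s => Real.exp (-q.2 / 2) * s) (fun _ => -Real.exp (-q.2))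
      _ _ q.1 dy (hxs _ _) (hasDerivAt_const _ _)
    have e : (fun s => pdy v (s, q.2)) =ᶠ[nhds q.1] fun s => pdy V (Φ (s, q.2)) := by
      filter_upwards [hev1] with s hs using vy _ hs
    refine (e.deriv_eq.trans h.deriv).trans ?_
    simp [hΦ]
  have hyt := pd_chain_two (pdy V) (fun s => Real.exp (-s / 2) * q.1) (fun s => -Real.exp (-s))
      _ _ q.2 dy (hxt _ _) (htt _)
  have httd := pd_chain_two (pdτ V) (fun s => Real.exp (-s / 2) * q.1) (fun s => -Real.exp (-s))
      _ _ q.2 dt (hxt _ _) (htt _)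
  have vyt : pdτ (pdy v) q = -(q.1 / 2) * Real.exp (-q.2 / 2) * pdy (pdy V) (Φ q)
      + Real.exp (-q.2) * pdτ (pdy V) (Φ q) := by
    have e : (fun s => pdy v (q.1, s)) =ᶠ[nhds q.2] fun s => pdy V (Φ (q.1, s)) := by
      filter_upwards [hev2] with s hs using vy _ hs
    exact e.deriv_eq.trans hyt.deriv
  have hvd : HasDerivAt (fun s => v (q.1, s)) (pdτ v q) q.2 := by
    have h := (hexp q.2).mul (pd_chain_two V (fun s => Real.exp (-s / 2) * q.1)
      (fun s => -Real.exp (-s)) _ _ q.2 (hdV _ hq) (hxt _ _) (htt _))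
    exact h.differentiableAt.hasDerivAt
  have vtt : pdτ (pdτ v) q = pdτ v q / 2 - q.1 / 2 * pdτ (pdy v) q
      - Real.exp (-q.2 / 2) / 2 * pdτ V (Φ q)
      + Real.exp (-q.2 / 2) * (-(q.1 / 2) * Real.exp (-q.2 / 2) * pdτ (pdy V) (Φ q)
        + Real.exp (-q.2) * pdτ (pdτ V) (Φ q)) := by
    have e : (fun s => pdτ v (q.1, s)) =ᶠ[nhds q.2] fun s => v (q.1, s) / 2
        - q.1 / 2 * pdy V (Φ (q.1, s)) + Real.exp (-s / 2) * pdτ V (Φ (q.1, s)) := by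
      filter_upwards [hev2] with s hs using vt _ hs
    have h := ((hvd.div_const 2).sub (hyt.const_mul (q.1 / 2))).add ((hneg q.2).mul httd)
    refine (e.deriv_eq.trans h.deriv).trans ?_
    rw [vyt, ← hsym]
    simp only [hΦ]
    ring
  have fin := alg_final (Real.exp (q.2 / 2)) q.1 (V (Φ q)) (pdy V (Φ q)) (pdτ V (Φ q))
    (pdy (pdy V) (Φ q)) (pdτ (pdy V) (Φ q)) (pdτ (pdτ V) (Φ q)) (Real.exp_pos _) (hpos _ hq)
    (hPDE _ hq) (v q) (pdτ v q) (pdy (pdy v) q) (pdτ (pdy v) q) (pdτ (pdτ v) q) rfl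
    (by rw [vt q hq, hEi]) (by rw [vyy, hEi]) (by rw [vyt, hEi, hEi2])
    (by rw [vtt, hEi, hEi2])
  unfold RenormEq Nop
  rw [vy q hq, hE2 q.2]
  exact fin

end
end

section
/- Let Ω′ ⊆ ℝ² be open and let v₁, v₂ : Ω′ → ℝ be positive C² functions of (y,τ), each satisfying the renormalized translator equation on Ω′. Then the difference w := v₁ − v₂ satisfies, at every point of Ω′, w_τ = w_yy − (y/2)·w_y + w + E[w] + e^τ·(N[v₁] − N[v₂]), where E[w] := −((v₁)_y²/(1 + (v₁)_y²))·w_yy − (((v₁)_y + (v₂)_y)·(v₂)_yy/((1 + (v₁)_y²)·(1 + (v₂)_y²)))·w_y + ((2 − v₁·v₂)/(2·v₁·v₂))·w. -/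
noncomputable section

theorem slice_y {v : ℝ × ℝ → ℝ} {p : ℝ × ℝ} (h : ContDiffAt ℝ 2 v p) :
    ContDiffAt ℝ 2 (fun s => v (s, p.2)) p.1 := by
  have h' : ContDiffAt ℝ 2 v ((fun s : ℝ => (s, p.2)) p.1) := h
  exact h'.comp p.1 (contDiffAt_id.prodMk contDiffAt_const)

theorem slice_τ {v : ℝ × ℝ → ℝ} {p : ℝ × ℝ} (h : ContDiffAt ℝ 2 v p) :
    ContDiffAt ℝ 2 (fun s => v (p.1, s)) p.2 := by
  have h' : ContDiffAt ℝ 2 v ((fun s : ℝ => (p.1, s)) p.2) := h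
  exact h'.comp p.2 (contDiffAt_const.prodMk contDiffAt_id)

theorem slice_deriv {f : ℝ → ℝ} {x : ℝ} (h : ContDiffAt ℝ 2 f x) :
    DifferentiableAt ℝ (deriv f) x := by
  have h1 : ContDiffAt ℝ 1 (deriv f) x := h.derivWithin (by norm_num)
  exact h1.differentiableAt (by norm_num)

theorem pdy_sub {v w : ℝ × ℝ → ℝ} {p : ℝ × ℝ} (h : ContDiffAt ℝ 2 v p)
    (k : ContDiffAt ℝ 2 w p) : pdy (fun q => v q - w q) p = pdy v p - pdy w p :=
  deriv_fun_sub ((slice_y h).differentiableAt (by norm_num))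
    ((slice_y k).differentiableAt (by norm_num))

theorem pdτ_sub {v w : ℝ × ℝ → ℝ} {p : ℝ × ℝ} (h : ContDiffAt ℝ 2 v p)
    (k : ContDiffAt ℝ 2 w p) : pdτ (fun q => v q - w q) p = pdτ v p - pdτ w p :=
  deriv_fun_sub ((slice_τ h).differentiableAt (by norm_num))
    ((slice_τ k).differentiableAt (by norm_num))

theorem pdyy_sub {v w : ℝ × ℝ → ℝ} {p : ℝ × ℝ} (h : ContDiffAt ℝ 2 v p)
    (k : ContDiffAt ℝ 2 w p) :
    pdy (pdy (fun q => v q - w q)) p = pdy (pdy v) p - pdy (pdy w) p := by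
  have e : (fun s => pdy (fun q => v q - w q) (s, p.2)) =ᶠ[nhds p.1]
      fun s => pdy v (s, p.2) - pdy w (s, p.2) := by
    have hc : Filter.Tendsto (fun s : ℝ => (s, p.2)) (nhds p.1) (nhds p) :=
      (Continuous.prodMk_left p.2).tendsto p.1
    filter_upwards [hc.eventually (h.eventually (by simp)),
      hc.eventually (k.eventually (by simp))] with s hs ks
    exact pdy_sub hs ks
  have := e.deriv_eq
  exact this.trans (deriv_fun_sub (slice_deriv (slice_y h)) (slice_deriv (slice_y k)))

/-- Evolution equation for the difference `w = v₁ − v₂` of two solutions of the renormalized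
translator equation: `w_τ = 𝔏w + E[w] + e^τ (N[v₁] − N[v₂])`. -/
theorem stmt_10 (Ω' : Set (ℝ × ℝ)) (hopen : IsOpen Ω')
    (v₁ v₂ : ℝ × ℝ → ℝ)
    (h1C2 : ∀ p ∈ Ω', ContDiffAt ℝ 2 v₁ p) (h1pos : ∀ p ∈ Ω', 0 < v₁ p)
    (h1eq : ∀ p ∈ Ω', RenormEq v₁ p)
    (h2C2 : ∀ p ∈ Ω', ContDiffAt ℝ 2 v₂ p) (h2pos : ∀ p ∈ Ω', 0 < v₂ p)
    (h2eq : ∀ p ∈ Ω', RenormEq v₂ p) :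
    ∀ p ∈ Ω',
      pdτ (fun q => v₁ q - v₂ q) p
        = (pdy (pdy (fun q => v₁ q - v₂ q)) p - p.1 / 2 * pdy (fun q => v₁ q - v₂ q) p
            + (v₁ p - v₂ p))
          + (-((pdy v₁ p) ^ 2 / (1 + (pdy v₁ p) ^ 2)) * pdy (pdy (fun q => v₁ q - v₂ q)) p
            - (pdy v₁ p + pdy v₂ p) * pdy (pdy v₂) p
                / ((1 + (pdy v₁ p) ^ 2) * (1 + (pdy v₂ p) ^ 2))
                * pdy (fun q => v₁ q - v₂ q) p
            + (2 - v₁ p * v₂ p) / (2 * v₁ p * v₂ p) * (v₁ p - v₂ p))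
          + Real.exp p.2 * (Nop v₁ p - Nop v₂ p) := by
  intro p hp
  rw [pdτ_sub (h1C2 p hp) (h2C2 p hp), pdyy_sub (h1C2 p hp) (h2C2 p hp),
    pdy_sub (h1C2 p hp) (h2C2 p hp)]
  have e1 := h1eq p hp
  have e2 := h2eq p hp
  unfold RenormEq at e1 e2
  rw [e1, e2]
  have p1 := (h1pos p hp).ne'
  have p2 := (h2pos p hp).ne'
  generalize Nop v₁ p = n1
  generalize Nop v₂ p = n2
  generalize pdy (pdy v₁) p = A
  generalize pdy (pdy v₂) p = B
  generalize pdy v₁ p = a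
  generalize pdy v₂ p = b
  generalize v₁ p = x at *
  generalize v₂ p = z at *
  have ha : 1 + a ^ 2 ≠ 0 := by positivity
  have hb : 1 + b ^ 2 ≠ 0 := by positivity
  field_simp
  ring

end
end

section
/- Let d ≥ 1 be an integer, let c, C, R > 0 and θ₀ ∈ ℝ, and let w : B(0,R) → ℝ be a C² function on the open ball B(0,R) ⊆ ℝ². Write γ(r) := (r·cos θ₀, r·sin θ₀) and T := (−sin θ₀, cos θ₀). Assume that for all 0 < r < R: |w(γ(r))| ≤ C·r^{d+1} and |⟨∇w(γ(r)), T⟩| ≥ c·r^{d−1}, and that ‖∇²w(x)‖ ≤ C·|x|^{d−2} for all x with 0 < |x| < R. Then there exist r₀ ∈ (0,R), ε > 0, D < ∞ and a continuous function θ : (0,r₀] → ℝ such that for every r ∈ (0,r₀]: w(r·cos θ(r), r·sin θ(r)) = 0, |θ(r) − θ₀| ≤ D·r, and (r·cos θ(r), r·sin θ(r)) is the unique zero of w on the arc {(r·cos φ, r·sin φ) : |φ − θ₀| ≤ ε}. In particular θ(r) → θ₀ as r → 0. -/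
noncomputable section

open Real

/-- The point `(r cos θ, r sin θ)` of the Euclidean plane. -/
def polarPt (r θ : ℝ) : EuclideanSpace ℝ (Fin 2) :=
  (WithLp.equiv 2 (Fin 2 → ℝ)).symm ![r * Real.cos θ, r * Real.sin θ]

/-- The unit tangent vector `(−sin θ, cos θ)`. -/
def tangVec (θ : ℝ) : EuclideanSpace ℝ (Fin 2) :=
  (WithLp.equiv 2 (Fin 2 → ℝ)).symm ![-Real.sin θ, Real.cos θ]

lemma aux_polar_smul (r θ : ℝ) : polarPt r θ = r • polarPt 1 θ := by
  ext i
  fin_cases i <;> simp [polarPt]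

lemma aux_polar_rot (r φ θ₀ : ℝ) : polarPt r φ =
    (r * cos (φ - θ₀)) • polarPt 1 θ₀ + (r * sin (φ - θ₀)) • tangVec θ₀ := by
  have h1 : cos φ = cos (φ - θ₀) * cos θ₀ - sin (φ - θ₀) * sin θ₀ := by
    rw [← cos_add]; ring_nf
  have h2 : sin φ = sin (φ - θ₀) * cos θ₀ + cos (φ - θ₀) * sin θ₀ := by
    rw [← sin_add]; ring_nf
  ext i
  fin_cases i
  · simp [polarPt, tangVec]; rw [h1]; ring
  · simp [polarPt, tangVec]; rw [h2]; ring

lemma aux_tang_rot (φ θ₀ : ℝ) : tangVec φ =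
    (-sin (φ - θ₀)) • polarPt 1 θ₀ + (cos (φ - θ₀)) • tangVec θ₀ := by
  have h1 : cos φ = cos (φ - θ₀) * cos θ₀ - sin (φ - θ₀) * sin θ₀ := by
    rw [← cos_add]; ring_nf
  have h2 : sin φ = sin (φ - θ₀) * cos θ₀ + cos (φ - θ₀) * sin θ₀ := by
    rw [← sin_add]; ring_nf
  ext i
  fin_cases i
  · simp [polarPt, tangVec]; rw [h2]; ring
  · simp [polarPt, tangVec]; rw [h1]; ring

lemma aux_norm_polar (r θ : ℝ) : ‖polarPt r θ‖ = |r| := by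
  rw [EuclideanSpace.norm_eq, ← Real.sqrt_sq_eq_abs]
  congr 1
  simp [polarPt, Fin.sum_univ_two]
  nlinarith [sin_sq_add_cos_sq θ]

lemma aux_norm_tang (θ : ℝ) : ‖tangVec θ‖ = 1 := by
  rw [EuclideanSpace.norm_eq]
  simp [tangVec, Fin.sum_univ_two]

lemma aux_deriv_polar (r φ : ℝ) :
    HasDerivAt (fun x => polarPt r x) (r • tangVec φ) φ := by
  have h : (fun x => polarPt r x) =
      fun x => (r * cos (x - 0)) • polarPt 1 0 + (r * sin (x - 0)) • tangVec 0 := by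
    funext x; exact aux_polar_rot r x 0
  rw [h, aux_tang_rot φ 0]
  have hc : HasDerivAt (fun x : ℝ => r * cos (x - 0)) (r * (-sin (φ - 0))) φ := by
    simpa using (Real.hasDerivAt_cos φ).const_mul r
  have hs : HasDerivAt (fun x : ℝ => r * sin (x - 0)) (r * cos (φ - 0)) φ := by
    simpa using (Real.hasDerivAt_sin φ).const_mul r
  have := (hc.smul_const (polarPt 1 0)).add (hs.smul_const (tangVec 0))
  rw [smul_add, smul_smul, smul_smul]
  exact this

/-- One dimensional lemma: positive derivative case. -/
lemma aux_one_dim_pos (g g' : ℝ → ℝ) (θ₀ ε m δ : ℝ) (hm : 0 < m) (hδε : δ ≤ ε)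
    (hg : ∀ φ, HasDerivAt g (g' φ) φ)
    (hpos : ∀ φ, |φ - θ₀| ≤ ε → m ≤ g' φ) (h0 : |g θ₀| ≤ m * δ) :
    (∃ θ, |θ - θ₀| ≤ δ ∧ g θ = 0) ∧
    ∀ φ ψ, |φ - θ₀| ≤ ε → |ψ - θ₀| ≤ ε → m * |φ - ψ| ≤ |g φ - g ψ| := by
  have hδ : 0 ≤ δ := by
    by_contra h
    have := abs_nonneg (g θ₀)
    nlinarith
  have key : ∀ φ ψ, |φ - θ₀| ≤ ε → |ψ - θ₀| ≤ ε → ψ ≤ φ → m * (φ - ψ) ≤ g φ - g ψ := by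
    intro φ ψ h1 h2 h
    rw [abs_le] at h1 h2
    rcases h.eq_or_lt with h | h
    · subst h; simp
    obtain ⟨ξ, hξ, he⟩ := exists_hasDerivAt_eq_slope g g' h
      (fun x _ => (hg x).continuousAt.continuousWithinAt) (fun x _ => hg x)
    have h3 := hpos ξ (by rw [abs_le]; constructor <;> linarith [hξ.1, hξ.2])
    rw [he, le_div_iff₀ (by linarith)] at h3
    exact h3
  refine ⟨?_, ?_⟩
  · have ha := key θ₀ (θ₀ - δ) (by simpa using hδ.trans hδε)
      (by rw [abs_le]; constructor <;> linarith) (by linarith)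
    have hb := key (θ₀ + δ) θ₀ (by rw [abs_le]; constructor <;> linarith)
      (by simpa using hδ.trans hδε) (by linarith)
    rw [abs_le] at h0
    obtain ⟨θ, hθ, he⟩ := intermediate_value_Icc (show θ₀ - δ ≤ θ₀ + δ by linarith)
      (fun x _ => (hg x).continuousAt.continuousWithinAt : ContinuousOn g _)
      (show (0 : ℝ) ∈ Set.Icc (g (θ₀ - δ)) (g (θ₀ + δ)) by
        constructor
        · nlinarith
        · nlinarith)
    exact ⟨θ, by rw [abs_le]; constructor <;> linarith [hθ.1, hθ.2], he⟩
  · intro φ ψ h1 h2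
    rcases le_total ψ φ with h | h
    · rw [abs_of_nonneg (sub_nonneg.2 h)]
      exact (key φ ψ h1 h2 h).trans (le_abs_self _)
    · rw [abs_sub_comm, abs_of_nonneg (sub_nonneg.2 h), abs_sub_comm]
      exact (key ψ φ h2 h1 h).trans (le_abs_self _)

lemma aux_one_dim (g g' : ℝ → ℝ) (θ₀ ε m δ a : ℝ) (hm : 0 < m) (hδε : δ ≤ ε)
    (hg : ∀ φ, HasDerivAt g (g' φ) φ)
    (hnear : ∀ φ, |φ - θ₀| ≤ ε → ∃ t, 1 / 2 ≤ t ∧ |g' φ - t * a| ≤ m) (ha : 4 * m ≤ |a|)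
    (h0 : |g θ₀| ≤ m * δ) :
    (∃ θ, |θ - θ₀| ≤ δ ∧ g θ = 0) ∧
    ∀ φ ψ, |φ - θ₀| ≤ ε → |ψ - θ₀| ≤ ε → m * |φ - ψ| ≤ |g φ - g ψ| := by
  rcases le_total 0 a with h | h
  · rw [abs_of_nonneg h] at ha
    refine aux_one_dim_pos g g' θ₀ ε m δ hm hδε hg (fun φ hφ => ?_) h0
    obtain ⟨t, ht, hb⟩ := hnear φ hφ
    rw [abs_le] at hb
    nlinarith
  · rw [abs_of_nonpos h] at ha
    have := aux_one_dim_pos (fun x => - g x) (fun x => - g' x) θ₀ ε m δ hm hδε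
      (fun x => (hg x).neg) (fun φ hφ => ?_) (by simpa using h0)
    · refine ⟨?_, fun φ ψ h1 h2 => ?_⟩
      · obtain ⟨θ, h1, h2⟩ := this.1
        exact ⟨θ, h1, by simpa using h2⟩
      · have h3 := this.2 φ ψ h1 h2
        rwa [← abs_neg (-g φ - -g ψ), show -(-g φ - -g ψ) = g φ - g ψ by ring] at h3
    obtain ⟨t, ht, hb⟩ := hnear φ hφ
    rw [abs_le] at hb
    nlinarith

/-- Bound on the radial derivative along the ray. -/
lemma aux_radial (d : ℕ) (hd : 1 ≤ d) (C R θ₀ : ℝ) (hC : 0 < C)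
    (w : EuclideanSpace ℝ (Fin 2) → ℝ)
    (h1 : ∀ x, ‖x‖ < R → HasFDerivAt w (fderiv ℝ w x) x)
    (h2 : ∀ x, ‖x‖ < R → HasFDerivAt (fderiv ℝ w) (fderiv ℝ (fderiv ℝ w) x) x)
    (hval : ∀ r : ℝ, 0 < r → r < R → |w (polarPt r θ₀)| ≤ C * r ^ ((d : ℝ) + 1))
    (hhess : ∀ x : EuclideanSpace ℝ (Fin 2), 0 < ‖x‖ → ‖x‖ < R →
      ‖fderiv ℝ (fderiv ℝ w) x‖ ≤ C * ‖x‖ ^ ((d : ℝ) - 2))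
    (r : ℝ) (hr : 0 < r) (hrR : r < R) :
    |fderiv ℝ w (polarPt r θ₀) (polarPt 1 θ₀)| ≤ (4 * R + 1) * C * r ^ ((d : ℝ) - 1) := by
  have hd' : (1 : ℝ) ≤ d := by exact_mod_cast hd
  set X := r ^ ((d : ℝ) - 1) with hX
  have hX0 : 0 < X := rpow_pos_of_pos hr _
  set N := polarPt 1 θ₀ with hN
  have hNn : ‖N‖ = 1 := by simp [hN, aux_norm_polar]
  have hp : ∀ s, polarPt s θ₀ = s • N := fun s => aux_polar_smul s θ₀
  have hn : ∀ s, 0 < s → ‖s • N‖ = s := fun s hs => by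
    rw [norm_smul, hNn, mul_one, Real.norm_of_nonneg hs.le]
  have hline : ∀ s : ℝ, HasDerivAt (fun s : ℝ => s • N) N s := fun s => by
    simpa using (hasDerivAt_id s).smul_const N
  have hh : ∀ s, 0 < s → s < R → HasDerivAt (fun s : ℝ => w (s • N)) (fderiv ℝ w (s • N) N) s :=
    fun s hs hsR => (h1 (s • N) (by rw [hn s hs]; exact hsR)).comp_hasDerivAt s (hline s)
  have hk : ∀ s, 0 < s → s < R → HasDerivAt (fun s : ℝ => fderiv ℝ w (s • N) N)
      (fderiv ℝ (fderiv ℝ w) (s • N) N N) s := by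
    intro s hs hsR
    have := (h2 (s • N) (by rw [hn s hs]; exact hsR)).comp_hasDerivAt s (hline s)
    have h3 := this.clm_apply (hasDerivAt_const s N)
    simpa using h3
  have hmono : ∀ s, 0 < s → s ≤ r → s ^ ((d : ℝ) - 1) ≤ X := fun s hs hsr =>
    rpow_le_rpow hs.le hsr (by linarith)
  have hp1 : ∀ s : ℝ, 0 < s → s ^ ((d : ℝ) + 1) = s ^ 2 * s ^ ((d : ℝ) - 1) := fun s hs => by
    rw [← rpow_natCast, ← rpow_add hs]; congr 1; push_cast; ring
  have hp2 : ∀ s : ℝ, 0 < s → s ^ ((d : ℝ) - 2) = s ^ ((d : ℝ) - 1) / s := fun s hs => by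
    rw [← rpow_sub_one hs.ne']; congr 1; ring
  have hv : ∀ s, 0 < s → s ≤ r → |w (s • N)| ≤ C * (r ^ 2 * X) := by
    intro s hs hsr
    have := hval s hs (by linarith)
    rw [hp, hp1 s hs] at this
    refine this.trans ?_
    have := hmono s hs hsr
    gcongr
  have hr2 : r / 2 < r := by linarith
  obtain ⟨ξ, hξ, he⟩ := exists_hasDerivAt_eq_slope (fun s : ℝ => w (s • N))
    (fun s => fderiv ℝ w (s • N) N) hr2
    (fun x hx => (hh x (by linarith [hx.1]) (by linarith [hx.2])).continuousAt.continuousWithinAt)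
    (fun x hx => hh x (by linarith [hx.1]) (by linarith [hx.2]))
  have hbξ : |fderiv ℝ w (ξ • N) N| ≤ 4 * R * C * X := by
    rw [he, abs_div, abs_of_pos (show (0 : ℝ) < r - r / 2 by linarith), div_le_iff₀ (by linarith)]
    have ha := hv r hr le_rfl
    have hb := hv (r / 2) (by linarith) (by linarith)
    have := abs_sub (w (r • N)) (w ((r / 2) • N))
    have h4 : C * X * r * r ≤ C * X * r * R := by gcongr
    nlinarith
  have hdiff : ‖fderiv ℝ w (r • N) N - fderiv ℝ w (ξ • N) N‖ ≤ (C * (X / (r / 2))) * ‖r - ξ‖ := by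
    refine Convex.norm_image_sub_le_of_norm_hasDerivWithin_le
      (f := fun s : ℝ => fderiv ℝ w (s • N) N)
      (f' := fun s => fderiv ℝ (fderiv ℝ w) (s • N) N N) (s := Set.Icc (r / 2) r)
      (fun x hx => (hk x (by linarith [hx.1]) (by linarith [hx.2])).hasDerivWithinAt)
      ?_ (convex_Icc _ _) ⟨hξ.1.le, hξ.2.le⟩ ⟨hr2.le, le_rfl⟩
    intro x hx
    have hx0 : 0 < x := by linarith [hx.1]
    have hH := hhess (x • N) (by rw [hn x hx0]; exact hx0)
      (by rw [hn x hx0]; linarith [hx.2])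
    rw [hn x hx0, hp2 x hx0] at hH
    have h5 : ‖fderiv ℝ (fderiv ℝ w) (x • N) N N‖ ≤ ‖fderiv ℝ (fderiv ℝ w) (x • N)‖ := by
      have := ContinuousLinearMap.le_opNorm₂ (fderiv ℝ (fderiv ℝ w) (x • N)) N N
      simpa [hNn] using this
    refine (h5.trans hH).trans ?_
    have h6 := hmono x hx0 hx.2
    have h7 := hx.1
    gcongr
  have hdiff2 : |fderiv ℝ w (r • N) N - fderiv ℝ w (ξ • N) N| ≤ C * X := by
    rw [← Real.norm_eq_abs]
    refine hdiff.trans ?_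
    rw [Real.norm_of_nonneg (by linarith [hξ.2])]
    calc C * (X / (r / 2)) * (r - ξ) ≤ C * (X / (r / 2)) * (r / 2) := by
          gcongr; linarith [hξ.1]
      _ = C * X := by field_simp
  rw [hp]
  have := abs_sub_abs_le_abs_sub (fderiv ℝ w (r • N) N) (fderiv ℝ w (ξ • N) N)
  linarith

/-- From a zero ray of the leading Taylor polynomial of a nodal function one obtains a genuine
zero curve emanating from the origin at the same angle, on which all nearby zeros lie. -/
theorem stmt_12 (d : ℕ) (hd : 1 ≤ d) (c C R θ₀ : ℝ) (hc : 0 < c) (hC : 0 < C) (hR : 0 < R)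
    (w : EuclideanSpace ℝ (Fin 2) → ℝ)
    (hw : ContDiffOn ℝ 2 w (Metric.ball 0 R))
    (hval : ∀ r : ℝ, 0 < r → r < R → |w (polarPt r θ₀)| ≤ C * r ^ ((d : ℝ) + 1))
    (hgrad : ∀ r : ℝ, 0 < r → r < R →
      c * r ^ ((d : ℝ) - 1) ≤ |fderiv ℝ w (polarPt r θ₀) (tangVec θ₀)|)
    (hhess : ∀ x : EuclideanSpace ℝ (Fin 2), 0 < ‖x‖ → ‖x‖ < R →
      ‖fderiv ℝ (fderiv ℝ w) x‖ ≤ C * ‖x‖ ^ ((d : ℝ) - 2)) :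
    ∃ r₀ : ℝ, 0 < r₀ ∧ r₀ < R ∧ ∃ ε : ℝ, 0 < ε ∧ ∃ D : ℝ, ∃ θ : ℝ → ℝ,
      ContinuousOn θ (Set.Ioc 0 r₀) ∧
      (∀ r ∈ Set.Ioc (0 : ℝ) r₀,
        w (polarPt r (θ r)) = 0 ∧ |θ r - θ₀| ≤ D * r ∧
        ∀ φ : ℝ, |φ - θ₀| ≤ ε → w (polarPt r φ) = 0 → polarPt r φ = polarPt r (θ r)) ∧
      Filter.Tendsto θ (nhdsWithin 0 (Set.Ioi 0)) (nhds θ₀) := by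
  have hd' : (1 : ℝ) ≤ d := by exact_mod_cast hd
  have hat : ∀ x : EuclideanSpace ℝ (Fin 2), ‖x‖ < R → ContDiffAt ℝ 2 w x := fun x hx =>
    hw.contDiffAt (Metric.isOpen_ball.mem_nhds (by simpa using hx))
  have h1 : ∀ x : EuclideanSpace ℝ (Fin 2), ‖x‖ < R → HasFDerivAt w (fderiv ℝ w x) x :=
    fun x hx => ((hat x hx).differentiableAt (by norm_num)).hasFDerivAt
  have h2 : ∀ x : EuclideanSpace ℝ (Fin 2), ‖x‖ < R →
      HasFDerivAt (fderiv ℝ w) (fderiv ℝ (fderiv ℝ w) x) x := fun x hx =>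
    (((hat x hx).fderiv_right (m := 1) (by norm_num)).differentiableAt (by norm_num)).hasFDerivAt
  set K := (4 * R + 1) * C with hK
  have hK0 : 0 < K := by positivity
  have hrad := aux_radial d hd C R θ₀ hC w h1 h2 hval hhess
  set ε := min 1 (c / (4 * (C + K))) with hε
  have hε0 : 0 < ε := by positivity
  have hε1 : ε ≤ 1 := min_le_left _ _
  have hε2 : (C + K) * ε ≤ c / 4 := by
    have : ε ≤ c / (4 * (C + K)) := min_le_right _ _
    rw [le_div_iff₀ (by positivity)] at this
    linarith
  set D := 4 * C / c with hD
  have hD0 : 0 < D := by positivity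
  set r₀ := min (R / 2) (ε / D) with hr₀
  have hr₀0 : 0 < r₀ := by positivity
  have hr₀R : r₀ < R := (min_le_left _ _).trans_lt (by linarith)
  have hr₀D : D * r₀ ≤ ε := by
    have : r₀ ≤ ε / D := min_le_right _ _
    rw [le_div_iff₀ hD0] at this
    linarith
  have main : ∀ r, 0 < r → r ≤ r₀ →
      (∃ θ, |θ - θ₀| ≤ D * r ∧ w (polarPt r θ) = 0) ∧
      ∀ φ ψ, |φ - θ₀| ≤ ε → |ψ - θ₀| ≤ ε →
        (r * (c / 4 * r ^ ((d : ℝ) - 1))) * |φ - ψ| ≤ |w (polarPt r φ) - w (polarPt r ψ)| := by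
    intro r hr hrr
    have hrR : r < R := by linarith
    have hnr : ∀ φ, ‖polarPt r φ‖ = r := fun φ => by rw [aux_norm_polar, abs_of_pos hr]
    have hDr : D * r ≤ ε := (by gcongr : D * r ≤ D * r₀).trans hr₀D
    have hgr := hgrad r hr hrR
    have hvr := hval r hr hrR
    have hrr' := hrad r hr hrR
    have hX0 : 0 < r ^ ((d : ℝ) - 1) := rpow_pos_of_pos hr _
    have hp1 : r ^ ((d : ℝ) + 1) = r ^ 2 * r ^ ((d : ℝ) - 1) := by
      rw [← rpow_natCast, ← rpow_add hr]; congr 1; push_cast; ring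
    have hp2 : r ^ ((d : ℝ) - 2) = r ^ ((d : ℝ) - 1) / r := by
      rw [← rpow_sub_one hr.ne']; congr 1; ring
    set X := r ^ ((d : ℝ) - 1) with hX
    refine aux_one_dim (fun φ => w (polarPt r φ))
      (fun φ => fderiv ℝ w (polarPt r φ) (r • tangVec φ)) θ₀ ε (r * (c / 4 * X)) (D * r)
      (r * fderiv ℝ w (polarPt r θ₀) (tangVec θ₀)) (by positivity) hDr ?_ ?_ ?_ ?_
    · intro φ
      exact (h1 (polarPt r φ) (by rw [hnr]; exact hrR)).comp_hasDerivAt φ (aux_deriv_polar r φ)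
    · intro φ hφ
      refine ⟨cos (φ - θ₀), ?_, ?_⟩
      · have := Real.one_sub_sq_div_two_le_cos (x := φ - θ₀)
        have h3 : |φ - θ₀| ≤ 1 := hφ.trans hε1
        have h4 : (φ - θ₀) ^ 2 ≤ 1 := by
          rw [← sq_abs]; exact pow_le_one₀ (abs_nonneg _) h3
        linarith
      · have hdiff : ‖fderiv ℝ w (polarPt r φ) - fderiv ℝ w (polarPt r θ₀)‖ ≤
            (C * X) * ‖φ - θ₀‖ := by
          refine Convex.norm_image_sub_le_of_norm_hasDerivWithin_le
            (f := fun x : ℝ => fderiv ℝ w (polarPt r x))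
            (f' := fun x => fderiv ℝ (fderiv ℝ w) (polarPt r x) (r • tangVec x)) (s := Set.univ)
            (fun x _ => ((h2 (polarPt r x) (by rw [hnr]; exact hrR)).comp_hasDerivAt x
              (aux_deriv_polar r x)).hasDerivWithinAt)
            ?_ convex_univ (Set.mem_univ _) (Set.mem_univ _)
          intro x _
          have hH := hhess (polarPt r x) (by rw [hnr]; exact hr) (by rw [hnr]; exact hrR)
          rw [hnr, hp2] at hH
          have h3 := (fderiv ℝ (fderiv ℝ w) (polarPt r x)).le_opNorm (r • tangVec x)
          rw [norm_smul, aux_norm_tang, mul_one, Real.norm_of_nonneg hr.le] at h3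
          refine h3.trans ?_
          calc _ ≤ C * (X / r) * r := by gcongr
            _ = C * X := by field_simp
        have hA : |(fderiv ℝ w (polarPt r φ) - fderiv ℝ w (polarPt r θ₀)) (tangVec φ)|
            ≤ C * X * ε := by
          have h3 := (fderiv ℝ w (polarPt r φ) - fderiv ℝ w (polarPt r θ₀)).le_opNorm (tangVec φ)
          rw [aux_norm_tang, mul_one, Real.norm_eq_abs] at h3
          refine (h3.trans hdiff).trans ?_
          rw [Real.norm_eq_abs]
          gcongr
        have hB : |sin (φ - θ₀) * fderiv ℝ w (polarPt r θ₀) (polarPt 1 θ₀)| ≤ ε * (K * X) := by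
          rw [abs_mul]
          have h3 : |sin (φ - θ₀)| ≤ ε := (Real.abs_sin_le_abs).trans hφ
          gcongr
        have hEq : fderiv ℝ w (polarPt r φ) (r • tangVec φ) -
            cos (φ - θ₀) * (r * fderiv ℝ w (polarPt r θ₀) (tangVec θ₀)) =
            r * ((fderiv ℝ w (polarPt r φ) - fderiv ℝ w (polarPt r θ₀)) (tangVec φ)
              - sin (φ - θ₀) * fderiv ℝ w (polarPt r θ₀) (polarPt 1 θ₀)) := by
          have h3 : fderiv ℝ w (polarPt r θ₀) (tangVec φ) =
              -sin (φ - θ₀) * fderiv ℝ w (polarPt r θ₀) (polarPt 1 θ₀) +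
              cos (φ - θ₀) * fderiv ℝ w (polarPt r θ₀) (tangVec θ₀) := by
            rw [aux_tang_rot φ θ₀, map_add, map_smul, map_smul, smul_eq_mul, smul_eq_mul]
          rw [sub_apply, h3, map_smul, smul_eq_mul]
          ring
        rw [hEq, abs_mul, abs_of_pos hr]
        gcongr
        refine (abs_sub _ _).trans ?_
        have : (C + K) * ε * X ≤ c / 4 * X := by gcongr
        linarith
    · rw [abs_mul, abs_of_pos hr]
      have : r * (c * X) ≤ r * |fderiv ℝ w (polarPt r θ₀) (tangVec θ₀)| := by gcongr
      linarith
    · refine hvr.trans (le_of_eq ?_)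
      rw [hp1, hD]
      field_simp
  have hex : ∀ r, ∃ θ, 0 < r → r ≤ r₀ → |θ - θ₀| ≤ D * r ∧ w (polarPt r θ) = 0 := by
    intro r
    by_cases h : 0 < r ∧ r ≤ r₀
    · obtain ⟨θ, hθ⟩ := (main r h.1 h.2).1
      exact ⟨θ, fun _ _ => hθ⟩
    · exact ⟨0, fun ha hb => absurd ⟨ha, hb⟩ h⟩
  choose θ hθ using hex
  have hθε : ∀ r, 0 < r → r ≤ r₀ → |θ r - θ₀| ≤ ε := fun r hr hrr =>
    (hθ r hr hrr).1.trans ((by gcongr : D * r ≤ D * r₀).trans hr₀D)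
  refine ⟨r₀, hr₀0, hr₀R, ε, hε0, D, θ, ?_, ?_, ?_⟩
  · intro r hr
    have hrR : r < R := by linarith [hr.2]
    have hcont : ContinuousAt (fun s => w (polarPt s (θ r))) r := by
      have ha : ContinuousAt w (polarPt r (θ r)) :=
        (h1 _ (by rw [aux_norm_polar, abs_of_pos hr.1]; exact hrR)).continuousAt
      have hb : ContinuousAt (fun s => polarPt s (θ r)) r := by
        have : (fun s => polarPt s (θ r)) = fun s => s • polarPt 1 (θ r) := by
          funext s; exact aux_polar_smul s _
        rw [this]
        fun_prop
      exact ContinuousAt.comp (g := w) (f := fun s => polarPt s (θ r)) ha hb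
    have hcm : ContinuousAt (fun s : ℝ => s * (c / 4 * s ^ ((d : ℝ) - 1))) r :=
      continuousAt_id.mul (continuousAt_const.mul
        (Real.continuousAt_rpow_const r _ (Or.inl hr.1.ne')))
    have hm0 : r * (c / 4 * r ^ ((d : ℝ) - 1)) ≠ 0 := by
      have := rpow_pos_of_pos hr.1 ((d : ℝ) - 1)
      have := hr.1
      positivity
    have hq := (hcont.abs.div hcm hm0).tendsto
    rw [Pi.div_apply, (hθ r hr.1 hr.2).2, abs_zero, zero_div] at hq
    rw [ContinuousWithinAt, tendsto_iff_dist_tendsto_zero]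
    refine squeeze_zero' (Filter.Eventually.of_forall fun _ => dist_nonneg) ?_
      (hq.mono_left nhdsWithin_le_nhds)
    filter_upwards [self_mem_nhdsWithin] with s hs
    have h3 := (main s hs.1 hs.2).2 (θ s) (θ r) (hθε s hs.1 hs.2) (hθε r hr.1 hr.2)
    rw [(hθ s hs.1 hs.2).2, zero_sub, abs_neg] at h3
    have := rpow_pos_of_pos hs.1 ((d : ℝ) - 1)
    have := hs.1
    rw [Real.dist_eq, Pi.div_apply, le_div_iff₀ (by positivity), mul_comm]
    exact h3
  · intro r hr
    refine ⟨(hθ r hr.1 hr.2).2, (hθ r hr.1 hr.2).1, fun φ hφ h0 => ?_⟩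
    have h3 := (main r hr.1 hr.2).2 φ (θ r) hφ (hθε r hr.1 hr.2)
    rw [h0, (hθ r hr.1 hr.2).2, sub_zero, abs_zero] at h3
    have := rpow_pos_of_pos hr.1 ((d : ℝ) - 1)
    have := hr.1
    have hpos : 0 < r * (c / 4 * r ^ ((d : ℝ) - 1)) := by positivity
    have h4 : |φ - θ r| ≤ 0 := by
      by_contra hne
      push Not at hne
      nlinarith [mul_pos hpos hne]
    have h5 : φ = θ r := by
      have := abs_nonpos_iff.1 h4
      linarith
    rw [h5]
  · rw [tendsto_iff_dist_tendsto_zero]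
    have hlim : Filter.Tendsto (fun r : ℝ => D * r) (nhdsWithin 0 (Set.Ioi 0)) (nhds 0) := by
      have : ContinuousAt (fun r : ℝ => D * r) 0 := by fun_prop
      have := this.tendsto
      rw [mul_zero] at this
      exact this.mono_left nhdsWithin_le_nhds
    refine squeeze_zero' (Filter.Eventually.of_forall fun _ => dist_nonneg) ?_ hlim
    filter_upwards [Ioc_mem_nhdsGT hr₀0] with s hs
    rw [Real.dist_eq]
    exact (hθ s hs.1 hs.2).1


end
end

section
/- Let Ω ⊆ ℝ³ be open with 0 ∈ Ω, and let u₁, u₂ : Ω → ℝ be smooth solutions of the graphical translator equation div(∇u/√(1 + |∇u|²)) − 1/√(1 + |∇u|²) = 0 on Ω, with ∇u₁(0) = 0. Let w := u₁ − u₂ and let d ≥ 2 be an integer such that all partial derivatives of w of order at most d − 1 vanish at 0. Then the degree-d term of the Taylor expansion of w at 0 is a harmonic polynomial; equivalently, for every x ∈ ℝ³, the sum over i = 1, 2, 3 of D^d w(0)[e_i, e_i, x, …, x] equals 0, where D^d w(0) denotes the d-th iterated differential of w at 0 (a symmetric d-linear form) and e₁, e₂, e₃ is the standard basis of ℝ³.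 -/
noncomputable section

/-- Divergence of a vector field on `ℝ³`. -/
def divg (F : EuclideanSpace ℝ (Fin 3) → EuclideanSpace ℝ (Fin 3))
    (x : EuclideanSpace ℝ (Fin 3)) : ℝ :=
  ∑ i : Fin 3, fderiv ℝ F x (EuclideanSpace.single i 1) i

/-- The upward-moving graphical translator equation
`div(∇u/√(1+|∇u|²)) − 1/√(1+|∇u|²) = 0`. -/
def TranslatorEq (u : EuclideanSpace ℝ (Fin 3) → ℝ) (x : EuclideanSpace ℝ (Fin 3)) : Prop :=
  divg (fun y => (Real.sqrt (1 + ‖gradient u y‖ ^ 2))⁻¹ • gradient u y) x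
    - (Real.sqrt (1 + ‖gradient u x‖ ^ 2))⁻¹ = 0


open scoped ContDiff Topology
open Filter Asymptotics

abbrev E3 := EuclideanSpace ℝ (Fin 3)

/-- Directional derivative. -/
def dd (a : E3) (g : E3 → ℝ) : E3 → ℝ := fun y => fderiv ℝ g y a

def Smo (Ω : Set E3) (g : E3 → ℝ) : Prop := ∀ y ∈ Ω, ContDiffAt ℝ ∞ g y

lemma Smo.dd {Ω : Set E3} {g : E3 → ℝ} (h : Smo Ω g) (a : E3) : Smo Ω (dd a g) := by
  intro y hy
  have := (h y hy).fderiv_right (m := ∞) (by simp)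
  exact this.clm_apply contDiffAt_const

lemma dd_congr {Ω : Set E3} (ho : IsOpen Ω) {g h : E3 → ℝ} (e : Set.EqOn g h Ω) (a : E3) :
    Set.EqOn (dd a g) (dd a h) Ω := by
  intro y hy
  have : g =ᶠ[𝓝 y] h := e.eventuallyEq_of_mem (ho.mem_nhds hy)
  simp only [dd, this.fderiv_eq]

lemma dd_dd {Ω : Set E3} {g : E3 → ℝ} (h : Smo Ω g) (a b : E3) {y : E3} (hy : y ∈ Ω) :
    dd a (dd b g) y = fderiv ℝ (fderiv ℝ g) y a b := by
  have h1 := ((h y hy).fderiv_right (m := ∞) (by simp)).differentiableAt (by simp)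
  have := (h1.hasFDerivAt.clm_apply (hasFDerivAt_const b y)).fderiv
  change fderiv ℝ (fun z => fderiv ℝ g z b) y a = _
  rw [this]
  simp

lemma dd_comm {Ω : Set E3} {g : E3 → ℝ} (h : Smo Ω g) (a b : E3) :
    Set.EqOn (dd a (dd b g)) (dd b (dd a g)) Ω := by
  intro y hy
  rw [dd_dd h a b hy, dd_dd h b a hy]
  exact (h y hy).isSymmSndFDerivAt (by simp; exact WithTop.coe_le_coe.2 le_top) a b

lemma Smo.iter {Ω : Set E3} {g : E3 → ℝ} (h : Smo Ω g) (x : E3) (k : ℕ) :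
    Smo Ω ((_root_.dd x)^[k] g) := by
  induction k with
  | zero => exact h
  | succ k ih => rw [Function.iterate_succ_apply']; exact ih.dd x

lemma dd_iter {Ω : Set E3} (ho : IsOpen Ω) {g : E3 → ℝ} (h : Smo Ω g) (a x : E3) (k : ℕ) :
    Set.EqOn (dd a ((dd x)^[k] g)) ((dd x)^[k] (dd a g)) Ω := by
  induction k with
  | zero => intro y _; rfl
  | succ k ih =>
    rw [Function.iterate_succ_apply', Function.iterate_succ_apply']
    exact (dd_comm (h.iter x k) a x).trans (dd_congr ho ih x)

lemma iter_succ {Ω : Set E3} {g : E3 → ℝ} (h : Smo Ω g) (n : ℕ) (v : Fin (n + 1) → E3) :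
    Set.EqOn (fun y => iteratedFDeriv ℝ (n + 1) g y v)
      (dd (v 0) (fun y => iteratedFDeriv ℝ n g y (Fin.tail v))) Ω := by
  intro y hy
  have := (h y hy).differentiableAt_iteratedFDeriv (m := n) (by exact_mod_cast WithTop.coe_lt_top _)
  exact this.iteratedFDeriv_succ_apply_left'

lemma iter_const {Ω : Set E3} (ho : IsOpen Ω) {g : E3 → ℝ} (h : Smo Ω g) (x : E3) (n : ℕ) :
    Set.EqOn (fun y => iteratedFDeriv ℝ n g y (fun _ => x)) ((dd x)^[n] g) Ω := by
  induction n with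
  | zero => intro y _; simp
  | succ n ih =>
    rw [Function.iterate_succ_apply']
    exact (iter_succ h n _).trans (dd_congr ho ih x)

lemma line_deriv {Ω : Set E3} (ho : IsOpen Ω) (h0 : (0 : E3) ∈ Ω) (x : E3) (k : ℕ) :
    ∀ {g : E3 → ℝ}, Smo Ω g →
    iteratedDeriv k (fun t : ℝ => g (t • x)) 0 = (dd x)^[k] g 0 := by
  induction k with
  | zero => intro g h; simp
  | succ k ih =>
    intro g h
    rw [iteratedDeriv_succ', Function.iterate_succ_apply, ← ih (h.dd x)]
    apply Filter.EventuallyEq.iteratedDeriv_eq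
    have hc : ContinuousAt (fun t : ℝ => t • x) 0 := by fun_prop
    have : ∀ᶠ t : ℝ in 𝓝 0, t • x ∈ Ω := hc.eventually (by simpa using ho.mem_nhds h0)
    filter_upwards [this] with t ht
    have h1 := ((h _ ht).differentiableAt (by simp)).hasFDerivAt
    have h2 : HasDerivAt (fun t : ℝ => t • x) x t := by
      simpa using (hasDerivAt_id t).smul_const x
    exact (h1.comp_hasDerivAt t h2).deriv

lemma taylor0 {g : ℝ → ℝ} (hg : ContDiffAt ℝ ∞ g 0) (n : ℕ)
    (hv : ∀ k < n, iteratedDeriv k g 0 = 0) :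
    (fun t => g t - iteratedDeriv n g 0 / (n.factorial : ℝ) * t ^ n) =o[𝓝 0] fun t => t ^ n := by
  have hn : ContDiffAt ℝ n g 0 := hg.of_le (by exact_mod_cast le_top)
  obtain ⟨u, hu, hcu⟩ := hn.contDiffOn le_rfl (by simp)
  obtain ⟨r, hr, hru⟩ := Metric.mem_nhds_iff.1 hu
  have hm : (0 : ℝ) ∈ Metric.ball (0 : ℝ) r := Metric.mem_ball_self hr
  have := taylor_isLittleO (convex_ball (0 : ℝ) r) hm (hcu.mono hru)
  rw [Metric.isOpen_ball.nhdsWithin_eq hm] at this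
  simp only [sub_zero] at this
  refine this.congr_left fun t => ?_
  rw [taylor_within_apply, Finset.sum_range_succ, Finset.sum_eq_zero]
  · rw [iteratedDerivWithin_of_isOpen Metric.isOpen_ball hm]
    simp only [sub_zero, smul_eq_mul]
    ring
  · intro k hk
    rw [iteratedDerivWithin_of_isOpen Metric.isOpen_ball hm, hv k (Finset.mem_range.1 hk), smul_zero]

abbrev ee (i : Fin 3) : E3 := EuclideanSpace.single i 1

lemma grad_coord (u : E3 → ℝ) (y : E3) (i : Fin 3) : gradient u y i = dd (ee i) u y := by
  have : inner ℝ (gradient u y) (ee i) = fderiv ℝ u y (ee i) := by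
    rw [gradient, InnerProductSpace.toDual_symm_apply]
  rw [dd, ← this, real_inner_comm, EuclideanSpace.inner_single_left]
  simp

lemma expand {Ω : Set E3} {u : E3 → ℝ} (h : Smo Ω u) {x : E3} (hx : x ∈ Ω)
    (ht : TranslatorEq u x) :
    (1 + ∑ k, dd (ee k) u x ^ 2) * (∑ i, dd (ee i) (dd (ee i) u) x - 1)
      = ∑ i, ∑ j, dd (ee i) (dd (ee j) u) x * dd (ee i) u x * dd (ee j) u x := by
  have hnorm : ∀ y, ‖gradient u y‖ ^ 2 = ∑ k, dd (ee k) u y ^ 2 := by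
    intro y
    rw [EuclideanSpace.norm_sq_eq]
    simp [grad_coord]
  set F : E3 → E3 := fun y => (Real.sqrt (1 + ‖gradient u y‖ ^ 2))⁻¹ • gradient u y with hF
  set s : ℝ := Real.sqrt (1 + ∑ k, dd (ee k) u x ^ 2) with hs
  have hpos : 0 < 1 + ∑ k, dd (ee k) u x ^ 2 := by positivity
  have hspos : 0 < s := Real.sqrt_pos.2 hpos
  have hsq : s ^ 2 = 1 + ∑ k, dd (ee k) u x ^ 2 := Real.sq_sqrt hpos.le
  have hP : ∀ k, HasFDerivAt (dd (ee k) u) (fderiv ℝ (dd (ee k) u) x) x := fun k =>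
    ((h.dd (ee k) x hx).differentiableAt (by simp)).hasFDerivAt
  have hQ : HasFDerivAt (fun y => 1 + ∑ k, dd (ee k) u y ^ 2)
      (∑ k, (2 * dd (ee k) u x) • fderiv ℝ (dd (ee k) u) x) x := by
    refine HasFDerivAt.const_add _ (HasFDerivAt.fun_sum fun k _ => ?_)
    simpa using (hP k).pow 2
  have hS := (hasDerivAt_inv hspos.ne').comp_hasFDerivAt x (hQ.sqrt hpos.ne')
  have hc : ∀ i, HasFDerivAt (fun y => F y i)
      (s⁻¹ • fderiv ℝ (dd (ee i) u) x + dd (ee i) u x • (-(s ^ 2)⁻¹ • (1 / (2 * s)) •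
        ∑ k, (2 * dd (ee k) u x) • fderiv ℝ (dd (ee k) u) x)) x := fun i => by
    have := hS.mul (hP i)
    refine this.congr_of_eventuallyEq (Eventually.of_forall fun y => ?_)
    simp [hF, hnorm, grad_coord]
  have hFd : DifferentiableAt ℝ F x := differentiableAt_euclidean.2 fun i => (hc i).differentiableAt
  have hco : ∀ i v, fderiv ℝ F x v i = (s⁻¹ • fderiv ℝ (dd (ee i) u) x + dd (ee i) u x •
      (-(s ^ 2)⁻¹ • (1 / (2 * s)) • ∑ k, (2 * dd (ee k) u x) • fderiv ℝ (dd (ee k) u) x)) v := by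
    intro i v
    have h1 := (EuclideanSpace.proj (𝕜 := ℝ) i : E3 →L[ℝ] ℝ).hasFDerivAt.comp x hFd.hasFDerivAt
    have h2 := h1.unique (hc i)
    rw [← h2]
    rfl
  have ht' : ∑ i, fderiv ℝ F x (ee i) i - s⁻¹ = 0 := by
    have := ht
    rw [TranslatorEq, divg, hnorm x] at this
    exact this
  simp only [hco] at ht'
  rw [← hsq]
  have hd : ∀ i j, fderiv ℝ (dd (ee j) u) x (ee i) = dd (ee i) (dd (ee j) u) x := fun _ _ => rfl
  simp only [Fin.sum_univ_three, _root_.add_apply, _root_.smul_apply, smul_eq_mul, hd] at ht' ⊢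
  field_simp at ht'
  linarith

lemma coef_zero {c : ℝ} {n : ℕ} (h : (fun t : ℝ => c * t ^ n) =o[𝓝 0] fun t => t ^ n) : c = 0 := by
  by_contra hc
  have h1 : (fun t : ℝ => t ^ n) =o[𝓝 0] fun t => t ^ n := by
    simpa [hc] using (isLittleO_const_mul_left_iff hc).1 h
  have h2 := h1.mono (nhdsWithin_le_nhds (s := {0}ᶜ))
  refine isLittleO_irrefl ?_ h2
  refine Eventually.frequently ?_
  filter_upwards [self_mem_nhdsWithin] with t ht
  exact pow_ne_zero n ht

lemma comp_line {Ω : Set E3} (h0 : (0 : E3) ∈ Ω) (x : E3) {g : E3 → ℝ} (h : Smo Ω g) :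
    ContDiffAt ℝ ∞ (fun t : ℝ => g (t • x)) 0 := by
  have h1 : ContDiffAt ℝ ∞ (fun t : ℝ => t • x) 0 := by fun_prop
  have h2 : ContDiffAt ℝ ∞ g ((0 : ℝ) • x) := by simpa using h 0 h0
  exact h2.comp (0 : ℝ) h1

lemma dd_sub {Ω : Set E3} {f g : E3 → ℝ} (hf : Smo Ω f) (hg : Smo Ω g) (a : E3) :
    Set.EqOn (dd a (fun y => f y - g y)) (fun y => dd a f y - dd a g y) Ω := by
  intro y hy
  have := fderiv_fun_sub ((hf y hy).differentiableAt (by simp)) ((hg y hy).differentiableAt (by simp))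
  simp [dd, this]

lemma alg (p r : Fin 3 → ℝ) (A B : Fin 3 → Fin 3 → ℝ)
    (h1 : (1 + ∑ k, p k ^ 2) * (∑ i, A i i - 1) = ∑ i, ∑ j, A i j * p i * p j)
    (h2 : (1 + ∑ k, r k ^ 2) * (∑ i, B i i - 1) = ∑ i, ∑ j, B i j * r i * r j) :
    ∑ i, (A i i - B i i) = ∑ i, ∑ j, (p i * p j) * (A i j - B i j)
      + ∑ i, (-∑ k, p k ^ 2) * (A i i - B i i)
      + ∑ k, (-(p k + r k) * (∑ i, B i i - 1) + ∑ i, (B i k * p i + B k i * r i)) * (p k - r k) := by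
  simp only [Fin.sum_univ_three] at *
  linear_combination h1 - h2

/-- If two smooth graphical translators agree to order `d` at a common critical point, then the
degree-`d` term of the Taylor expansion of their difference is a harmonic polynomial. -/
theorem stmt_13 (Ω : Set (EuclideanSpace ℝ (Fin 3))) (hopen : IsOpen Ω)
    (h0 : (0 : EuclideanSpace ℝ (Fin 3)) ∈ Ω)
    (u₁ u₂ : EuclideanSpace ℝ (Fin 3) → ℝ)
    (h1smooth : ContDiffOn ℝ (⊤ : ℕ∞) u₁ Ω) (h2smooth : ContDiffOn ℝ (⊤ : ℕ∞) u₂ Ω)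
    (h1eq : ∀ x ∈ Ω, TranslatorEq u₁ x) (h2eq : ∀ x ∈ Ω, TranslatorEq u₂ x)
    (hcrit : gradient u₁ 0 = 0)
    (d : ℕ) (hd : 2 ≤ d)
    (hvanish : ∀ k : ℕ, k < d → iteratedFDeriv ℝ k (fun x => u₁ x - u₂ x) 0 = 0) :
    ∀ x : EuclideanSpace ℝ (Fin 3),
      ∑ i : Fin 3,
        iteratedFDeriv ℝ d (fun y => u₁ y - u₂ y) 0
          (fun j : Fin d => if (j : ℕ) < 2 then EuclideanSpace.single i 1 else x) = 0 := by
  intro x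
  have s1 : Smo Ω u₁ := fun y hy => h1smooth.contDiffAt (hopen.mem_nhds hy)
  have s2 : Smo Ω u₂ := fun y hy => h2smooth.contDiffAt (hopen.mem_nhds hy)
  obtain ⟨n, rfl⟩ : ∃ n, d = n + 2 := ⟨d - 2, by omega⟩
  set w : E3 → ℝ := fun y => u₁ y - u₂ y with hw
  have sw : Smo Ω w := fun y hy => (s1 y hy).sub (s2 y hy)
  -- derivatives along the line
  have key1 : ∀ a k, iteratedDeriv k (fun t : ℝ => dd a w (t • x)) 0
      = iteratedFDeriv ℝ (k + 1) w 0 (Fin.cons a fun _ => x) := by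
    intro a k
    rw [line_deriv hopen h0 x k (sw.dd a), ← dd_iter hopen sw a x k h0,
      ← dd_congr hopen (iter_const hopen sw x k) a h0]
    exact (iter_succ sw k (Fin.cons a fun _ => x) h0).symm
  have key2 : ∀ a b k, iteratedDeriv k (fun t : ℝ => dd a (dd b w) (t • x)) 0
      = iteratedFDeriv ℝ (k + 2) w 0 (Fin.cons a (Fin.cons b fun _ => x)) := by
    intro a b k
    rw [line_deriv hopen h0 x k ((sw.dd b).dd a), ← dd_iter hopen (sw.dd b) a x k h0,
      ← dd_congr hopen (dd_iter hopen sw b x k) a h0,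
      ← dd_congr hopen (dd_congr hopen (iter_const hopen sw x k) b) a h0]
    refine (dd_congr hopen (iter_succ sw k (Fin.cons b fun _ => x)) a h0).symm.trans ?_
    exact (iter_succ sw (k + 1) (Fin.cons a (Fin.cons b fun _ => x)) h0).symm
  have hvec : ∀ i : Fin 3, (fun j : Fin (n + 2) => if (j : ℕ) < 2 then ee i else x)
      = Fin.cons (ee i) (Fin.cons (ee i) fun _ => x) := by
    intro i
    funext j
    refine Fin.cases ?_ (fun j => Fin.cases ?_ (fun j => ?_) j) j <;> simp
  have z1 : ∀ a k, k < n + 1 → iteratedDeriv k (fun t : ℝ => dd a w (t • x)) 0 = 0 := by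
    intro a k hk
    rw [key1, hvanish (k + 1) (by omega)]; rfl
  have z2 : ∀ a b k, k < n → iteratedDeriv k (fun t : ℝ => dd a (dd b w) (t • x)) 0 = 0 := by
    intro a b k hk
    rw [key2, hvanish (k + 2) (by omega)]; rfl
  -- asymptotics
  have q1 : ∀ a, (fun t : ℝ => dd a w (t • x)) =o[𝓝 0] fun t => t ^ n := by
    intro a
    have := taylor0 (comp_line h0 x (sw.dd a)) n fun k hk => z1 a k (by omega)
    simpa [z1 a n (by omega)] using this
  have q2 : ∀ a b, (fun t : ℝ => dd a (dd b w) (t • x)) =O[𝓝 0] fun t => t ^ n := by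
    intro a b
    have := (taylor0 (comp_line h0 x ((sw.dd b).dd a)) n (z2 a b)).isBigO
    have h' := this.add (isBigO_const_mul_self (iteratedDeriv n
      (fun t : ℝ => dd a (dd b w) (t • x)) 0 / (n.factorial : ℝ)) (fun t : ℝ => t ^ n) (𝓝 0))
    simpa using h'
  have c1 : ∀ {g : E3 → ℝ}, Smo Ω g → ContinuousAt (fun t : ℝ => g (t • x)) 0 := fun h =>
    (comp_line h0 x h).continuousAt
  have p0 : ∀ i, dd (ee i) u₁ 0 = 0 := by
    intro i
    rw [← grad_coord, hcrit]; rfl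
  have small : ∀ {c f : ℝ → ℝ}, ContinuousAt c 0 → c 0 = 0 → f =O[𝓝 0] (fun t => t ^ n) →
      (fun t => c t * f t) =o[𝓝 0] fun t => t ^ n := by
    intro c f hc hc0 hf
    have : c =o[𝓝 0] fun _ => (1 : ℝ) := (isLittleO_one_iff ℝ).2 (by simpa [hc0] using hc.tendsto)
    simpa using this.mul_isBigO hf
  have small' : ∀ {c f : ℝ → ℝ}, ContinuousAt c 0 → f =o[𝓝 0] (fun t => t ^ n) →
      (fun t => c t * f t) =o[𝓝 0] fun t => t ^ n := by
    intro c f hc hf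
    have : c =O[𝓝 0] fun _ => (1 : ℝ) := hc.tendsto.isBigO_one ℝ
    simpa using this.mul_isLittleO hf
  have cp := fun i => c1 (s1.dd (ee i))
  have cr := fun i => c1 (s2.dd (ee i))
  have cB := fun i j => c1 ((s2.dd (ee j)).dd (ee i))
  have hlap : (fun t : ℝ => ∑ i, dd (ee i) (dd (ee i) w) (t • x)) =o[𝓝 0] fun t => t ^ n := by
    have hR : (fun t : ℝ =>
        ∑ i, ∑ j, (dd (ee i) u₁ (t • x) * dd (ee j) u₁ (t • x)) * dd (ee i) (dd (ee j) w) (t • x)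
        + ∑ i, (-∑ k, dd (ee k) u₁ (t • x) ^ 2) * dd (ee i) (dd (ee i) w) (t • x)
        + ∑ k, (-(dd (ee k) u₁ (t • x) + dd (ee k) u₂ (t • x))
            * (∑ i, dd (ee i) (dd (ee i) u₂) (t • x) - 1)
            + ∑ i, (dd (ee i) (dd (ee k) u₂) (t • x) * dd (ee i) u₁ (t • x)
              + dd (ee k) (dd (ee i) u₂) (t • x) * dd (ee i) u₂ (t • x)))
            * dd (ee k) w (t • x)) =o[𝓝 0] fun t => t ^ n := by
      refine (IsLittleO.add ?_ ?_).add ?_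
      · refine IsLittleO.fun_sum fun i _ => IsLittleO.fun_sum fun j _ => ?_
        exact small ((cp i).mul (cp j)) (by simp [p0]) (q2 _ _)
      · refine IsLittleO.fun_sum fun i _ => ?_
        refine small (c := fun t : ℝ => -∑ k, dd (ee k) u₁ (t • x) ^ 2) ?_ (by simp [p0]) (q2 _ _)
        exact (tendsto_finsetSum _ fun k _ => (cp k).pow 2).neg
      · refine IsLittleO.fun_sum fun k _ => ?_
        refine small' (ContinuousAt.add (ContinuousAt.mul ((cp k).add (cr k)).neg
          (ContinuousAt.sub ?_ continuousAt_const)) ?_) (q1 _)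
        · exact tendsto_finsetSum _ fun i _ => cB i i
        · exact tendsto_finsetSum _ fun i _ => ((cB i k).mul (cp i)).add ((cB k i).mul (cr i))
    refine hR.congr' ?_ EventuallyEq.rfl
    have hc : ContinuousAt (fun t : ℝ => t • x) 0 := by fun_prop
    have : ∀ᶠ t : ℝ in 𝓝 0, t • x ∈ Ω := hc.eventually (by simpa using hopen.mem_nhds h0)
    filter_upwards [this] with t ht
    have e1 : ∀ a, dd a w (t • x) = dd a u₁ (t • x) - dd a u₂ (t • x) := fun a => dd_sub s1 s2 a ht
    have e2 : ∀ a b, dd a (dd b w) (t • x) = dd a (dd b u₁) (t • x) - dd a (dd b u₂) (t • x) :=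
      fun a b => (dd_congr hopen (dd_sub s1 s2 b) a ht).trans (dd_sub (s1.dd b) (s2.dd b) a ht)
    simp only [e1, e2]
    exact (alg (fun i => dd (ee i) u₁ (t • x)) (fun i => dd (ee i) u₂ (t • x))
      (fun i j => dd (ee i) (dd (ee j) u₁) (t • x)) (fun i j => dd (ee i) (dd (ee j) u₂) (t • x))
      (expand s1 ht (h1eq _ ht)) (expand s2 ht (h2eq _ ht))).symm
  have hT : (fun t : ℝ => ∑ i, (dd (ee i) (dd (ee i) w) (t • x)
      - iteratedDeriv n (fun t : ℝ => dd (ee i) (dd (ee i) w) (t • x)) 0 / (n.factorial : ℝ)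
        * t ^ n)) =o[𝓝 0] fun t => t ^ n :=
    IsLittleO.fun_sum fun i _ => taylor0 (comp_line h0 x ((sw.dd (ee i)).dd (ee i))) n (z2 _ _)
  have hfin := coef_zero (c := ∑ i : Fin 3, iteratedDeriv n
      (fun t : ℝ => dd (ee i) (dd (ee i) w) (t • x)) 0 / (n.factorial : ℝ)) (n := n)
    ((hlap.sub hT).congr_left fun t => by
      rw [Finset.sum_sub_distrib, sub_sub_cancel, Finset.sum_mul])
  rw [← Finset.sum_div, div_eq_zero_iff] at hfin
  have hfin' := hfin.resolve_right (by positivity)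
  rw [← hfin']
  refine Finset.sum_congr rfl fun i _ => ?_
  rw [key2, ← hvec i]

end
end

section
/- Let c > 0, C₁ ≥ 0 and τ₀ ≤ −1. Let F : (−∞,τ₀] → ℝ be differentiable with e^{−cτ²/2}·F(τ) → 0 as τ → −∞, let G : (−∞,τ₀] → [0,∞), and let h : (−∞,τ₀] → [0,∞) be nondecreasing. Assume that for every τ ≤ τ₀ the quantity S(τ) := sup_{τ′ ≤ τ} |τ′|^{−1/2}·G(τ′) is finite and that F′(τ) ≤ −c·|τ|·F(τ) + C₁·|τ|^{−1}·(G(τ) + h(τ)²). Then for every τ ≤ τ₀, F(τ) ≤ (C₁/c)·(|τ|^{−3/2}·S(τ) + |τ|^{−2}·h(τ)²). -/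
open Filter

/-- The running supremum `S(τ) = sup_{τ′ ≤ τ} |τ′|^{−1/2} G(τ′)`. -/
noncomputable def runSupS (G : ℝ → ℝ) (τ : ℝ) : ℝ :=
  sSup ((fun τ' => |τ'| ^ (-(1 : ℝ) / 2) * G τ') '' Set.Iic τ)

/-- Gaussian-weighted differential-inequality argument from the energy estimate in the tip
region. -/
theorem stmt_14 (c C₁ τ₀ : ℝ) (hc : 0 < c) (hC₁ : 0 ≤ C₁) (hτ₀ : τ₀ ≤ -1)
    (F G h : ℝ → ℝ)
    (hFdiff : ∀ τ ≤ τ₀, DifferentiableAt ℝ F τ)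
    (hFlim : Tendsto (fun τ => Real.exp (-c * τ ^ 2 / 2) * F τ) atBot (nhds 0))
    (hG : ∀ τ ≤ τ₀, 0 ≤ G τ)
    (hh : ∀ τ ≤ τ₀, 0 ≤ h τ)
    (hmono : MonotoneOn h (Set.Iic τ₀))
    (hSfin : ∀ τ ≤ τ₀, BddAbove ((fun τ' => |τ'| ^ (-(1 : ℝ) / 2) * G τ') '' Set.Iic τ))
    (hineq : ∀ τ ≤ τ₀,
      deriv F τ ≤ -c * |τ| * F τ + C₁ * |τ|⁻¹ * (G τ + (h τ) ^ 2)) :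
    ∀ τ ≤ τ₀,
      F τ ≤ C₁ / c * (|τ| ^ (-(3 : ℝ) / 2) * runSupS G τ + |τ| ^ (-(2 : ℝ)) * (h τ) ^ 2) := by
  intro T hT
  have hT0 : T < 0 := by linarith
  have hTa : 0 < |T| := abs_pos.mpr hT0.ne
  set S := runSupS G T with hS
  set K := C₁ / c * (|T| ^ (-(3 : ℝ) / 2) * S + |T| ^ (-(2 : ℝ)) * (h T) ^ 2) with hK
  have hSle : ∀ s ≤ T, |s| ^ (-(1 : ℝ) / 2) * G s ≤ S := fun s hs =>
    le_csSup (hSfin T hT) ⟨s, hs, rfl⟩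
  have hS0 : 0 ≤ S :=
    le_trans (mul_nonneg (Real.rpow_nonneg (abs_nonneg _) _) (hG T hT)) (hSle T le_rfl)
  have key : ∀ s ≤ T, C₁ * |s|⁻¹ * (G s + (h s) ^ 2) ≤ c * |s| * K := by
    intro s hs
    have hs0 : s < 0 := by linarith
    have hsa : 0 < |s| := abs_pos.mpr hs0.ne
    have hTs : |T| ≤ |s| := by rw [abs_of_neg hT0, abs_of_neg hs0]; linarith
    have e1 : |s|⁻¹ = |s| ^ (-(1 : ℝ) / 2) * |s| ^ (-(1 : ℝ) / 2) := by
      rw [← Real.rpow_add hsa, ← Real.rpow_neg_one]; norm_num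
    have e2 : |s| ^ (-(1 : ℝ) / 2) = |s| * |s| ^ (-(3 : ℝ) / 2) := by
      nth_rewrite 2 [← Real.rpow_one |s|]
      rw [← Real.rpow_add hsa]; norm_num
    have e3 : |s|⁻¹ = |s| * |s| ^ (-(2 : ℝ)) := by
      nth_rewrite 2 [← Real.rpow_one |s|]
      rw [← Real.rpow_add hsa, ← Real.rpow_neg_one]; norm_num
    have m1 : |s| ^ (-(3 : ℝ) / 2) ≤ |T| ^ (-(3 : ℝ) / 2) :=
      Real.rpow_le_rpow_of_nonpos hTa hTs (by norm_num)
    have m2 : |s| ^ (-(2 : ℝ)) ≤ |T| ^ (-(2 : ℝ)) :=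
      Real.rpow_le_rpow_of_nonpos hTa hTs (by norm_num)
    have hhs : (h s) ^ 2 ≤ (h T) ^ 2 :=
      pow_le_pow_left₀ (hh s (hs.trans hT)) (hmono (hs.trans hT) hT hs) 2
    have b1 : |s|⁻¹ * G s ≤ |s| * (|T| ^ (-(3 : ℝ) / 2) * S) := by
      calc |s|⁻¹ * G s = |s| ^ (-(1 : ℝ) / 2) * (|s| ^ (-(1 : ℝ) / 2) * G s) := by
            rw [e1]; ring
        _ ≤ |s| ^ (-(1 : ℝ) / 2) * S :=
            mul_le_mul_of_nonneg_left (hSle s hs) (Real.rpow_nonneg hsa.le _)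
        _ = |s| * (|s| ^ (-(3 : ℝ) / 2) * S) := by rw [e2]; ring
        _ ≤ _ := by gcongr
    have b2 : |s|⁻¹ * (h s) ^ 2 ≤ |s| * (|T| ^ (-(2 : ℝ)) * (h T) ^ 2) := by
      rw [e3, mul_assoc]
      gcongr
    have e4 : c * |s| * K = C₁ * (|s| * (|T| ^ (-(3 : ℝ) / 2) * S)
        + |s| * (|T| ^ (-(2 : ℝ)) * (h T) ^ 2)) := by
      rw [hK]; field_simp
    rw [e4, mul_assoc, mul_add]
    exact mul_le_mul_of_nonneg_left (add_le_add b1 b2) hC₁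
  have hder : ∀ s ≤ T, HasDerivAt (fun s => Real.exp (-c * s ^ 2 / 2) * (F s - K))
      (Real.exp (-c * s ^ 2 / 2) * (-c * s) * (F s - K)
        + Real.exp (-c * s ^ 2 / 2) * deriv F s) s := by
    intro s hs
    have h1 : HasDerivAt (fun s : ℝ => -c * s ^ 2 / 2) (-c * s) s := by
      have := ((hasDerivAt_pow 2 s).const_mul (-c)).div_const 2
      refine this.congr_deriv ?_
      norm_num; ring
    exact h1.exp.mul ((hFdiff s (hs.trans hT)).hasDerivAt.sub_const K)
  have hanti : AntitoneOn (fun s => Real.exp (-c * s ^ 2 / 2) * (F s - K)) (Set.Iic T) := by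
    apply antitoneOn_of_deriv_nonpos (convex_Iic T)
    · exact fun s hs => (hder s hs).continuousAt.continuousWithinAt
    · intro s hs
      rw [interior_Iic] at hs
      exact (hder s (le_of_lt hs)).differentiableAt.differentiableWithinAt
    · intro s hs
      rw [interior_Iic] at hs
      have hs' : s ≤ T := le_of_lt hs
      rw [(hder s hs').deriv]
      have h1 := hineq s (hs'.trans hT)
      have h2 := key s hs'
      have hs0 : s < 0 := by linarith
      rw [abs_of_neg hs0] at h1 h2
      have : Real.exp (-c * s ^ 2 / 2) * (-c * s * (F s - K) + deriv F s) ≤ 0 :=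
        mul_nonpos_of_nonneg_of_nonpos (Real.exp_pos _).le (by linarith)
      linarith
  have hexp : Tendsto (fun s : ℝ => Real.exp (-c * s ^ 2 / 2)) atBot (nhds 0) := by
    apply Real.tendsto_exp_atBot.comp
    have h1 : Tendsto (fun s : ℝ => s ^ 2) atBot atTop := by
      have := (tendsto_pow_atTop (α := ℝ) two_ne_zero).comp tendsto_neg_atBot_atTop
      simpa [Function.comp_def] using this
    have h2 := h1.const_mul_atTop_of_neg (show -c / 2 < 0 by linarith)
    refine h2.congr fun s => by ring
  have hlim : Tendsto (fun s => Real.exp (-c * s ^ 2 / 2) * (F s - K)) atBot (nhds 0) := by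
    have := hFlim.sub (hexp.mul_const K)
    simp only [zero_mul, sub_zero] at this
    exact this.congr fun s => by ring
  have hfin : Real.exp (-c * T ^ 2 / 2) * (F T - K) ≤ 0 := by
    apply ge_of_tendsto hlim
    filter_upwards [eventually_le_atBot T] with s hs
    exact hanti hs (Set.mem_Iic.mpr le_rfl) hs
  have := nonpos_of_mul_nonpos_right hfin (Real.exp_pos _)
  linarith
end
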